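/- Let L = 2π. There exists δ₁ > 0 such that for every initial datum y₀ ∈ L²(0,L) with ‖y₀‖_{L²(0,L)} < δ₁ and every classical solution y of the nonlinear KdV system on [0,∞) with y(0,·) = y₀, one has ‖y(t,·)‖_{L²(0,L)} → 0 as t → +∞. -/

import Mathlib

open Set Real MeasureTheory Filter

/-- The `L²(0,L)` norm of a function on `(0,L)`. -/
noncomputable def L2norm (L : ℝ) (f : ℝ → ℝ) : ℝ :=
  Real.sqrt (∫ x in (0:ℝ)..L, (f x) ^ 2)

/-- A classical solution of the nonlinear KdV system
`y_t + y_x + y y_x + y_xxx = 0`, `y(t,0) = y(t,L) = y_x(t,L) = 0`, on `[0,∞) × [0,L]`. -/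
def IsNonlinearKdVSolIci (L : ℝ) (y : ℝ → ℝ → ℝ) : Prop :=
  (∀ t ∈ Ici (0:ℝ), ContDiffOn ℝ 3 (y t) (Icc (0:ℝ) L)) ∧
  (∀ x ∈ Icc (0:ℝ) L, ContDiffOn ℝ 1 (fun s => y s x) (Ici (0:ℝ))) ∧
  ContinuousOn (fun p : ℝ × ℝ => y p.1 p.2) (Ici (0:ℝ) ×ˢ Icc (0:ℝ) L) ∧
  (∀ t ∈ Ioi (0:ℝ), ∀ x ∈ Ioo (0:ℝ) L,
    derivWithin (fun s => y s x) (Ici (0:ℝ)) t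
      + derivWithin (y t) (Icc (0:ℝ) L) x
      + y t x * derivWithin (y t) (Icc (0:ℝ) L) x
      + iteratedDerivWithin 3 (y t) (Icc (0:ℝ) L) x = 0) ∧
  (∀ t ∈ Ici (0:ℝ),
    y t 0 = 0 ∧ y t L = 0 ∧ derivWithin (y t) (Icc (0:ℝ) L) L = 0)

/-!
At `L = 2π` the function `φ = 1 - cos` is a steady state of the linearized system, so the decay has
to come from the nonlinearity. Solving for the second order term `ψ` gives an approximate center
manifold `A ↦ A φ + A² ψ`, on which the nonlinear field is of size `|A|³`. Let `A(t)` be the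
component of `y(t)` along `φ` and `w` the deviation of `y(t)` from the manifold. The energy `∫ y²`
loses the boundary flux `y_x(0)²`, while the weighted energy `∫ (1 + x) w²` loses
`(y_x(0) + π A²)²` together with a multiple of `∫ w_x²`. Both fluxes vanish only if `A = 0`, and
`w ⊥ φ` satisfies a Poincaré inequality, so that `V = ∫ y² + (1 + x) w²` has
`V' ≤ -(A⁴ + ½ ∫ w²) ≤ -c (∫ y²)²`. As the energy is nonincreasing, `(∫ y(t)²)² (t - 1)` stays
bounded.

The time derivative of a classical solution is only separately continuous. Differentiating
under the integral sign requires a local bound on `‖y_t‖_{L²}`: a Gronwall estimate for time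
differences propagates such a bound forward, and the Baire category theorem starts the propagation.
-/

theorem integral_add_of_continuousOn {a b : ℝ} {f g : ℝ → ℝ} (hab : a ≤ b)
    (hf : ContinuousOn f (Icc a b)) (hg : ContinuousOn g (Icc a b)) :
    ∫ x in a..b, (f x + g x) = (∫ x in a..b, f x) + ∫ x in a..b, g x :=
  intervalIntegral.integral_add (hf.intervalIntegrable_of_Icc hab)
    (hg.intervalIntegrable_of_Icc hab)

theorem integral_sub_of_continuousOn {a b : ℝ} {f g : ℝ → ℝ} (hab : a ≤ b)
    (hf : ContinuousOn f (Icc a b)) (hg : ContinuousOn g (Icc a b)) :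
    ∫ x in a..b, (f x - g x) = (∫ x in a..b, f x) - ∫ x in a..b, g x :=
  intervalIntegral.integral_sub (hf.intervalIntegrable_of_Icc hab)
    (hg.intervalIntegrable_of_Icc hab)

theorem integral_mono_of_continuousOn {a b : ℝ} {f g : ℝ → ℝ} (hab : a ≤ b)
    (hf : ContinuousOn f (Icc a b)) (hg : ContinuousOn g (Icc a b))
    (h : ∀ x ∈ Icc a b, f x ≤ g x) : ∫ x in a..b, f x ≤ ∫ x in a..b, g x :=
  intervalIntegral.integral_mono_on hab (hf.intervalIntegrable_of_Icc hab)
    (hg.intervalIntegrable_of_Icc hab) h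

/-! ### Differentiation under the integral sign -/

section TimeDerivative

variable {L a b : ℝ} {f g f₁ g₁ f₂ g₂ : ℝ → ℝ → ℝ}

theorem exists_abs_le_of_continuousOn_uncurry
    (hf : ContinuousOn (Function.uncurry f) (Icc a b ×ˢ Icc 0 L)) :
    ∃ Y, 0 ≤ Y ∧ ∀ t ∈ Icc a b, ∀ x ∈ Icc 0 L, |f t x| ≤ Y := by
  obtain ⟨Y, hY⟩ := (isCompact_Icc.prod isCompact_Icc).exists_bound_of_continuousOn hf
  exact ⟨max Y 0, le_max_right _ _, fun t ht x hx => (hY (t, x) ⟨ht, hx⟩).trans (le_max_left _ _)⟩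

theorem continuousOn_integral_of_continuousOn_uncurry (hL : 0 ≤ L)
    (hf : ContinuousOn (Function.uncurry f) (Icc a b ×ˢ Icc 0 L)) :
    ContinuousOn (fun t => ∫ x in (0 : ℝ)..L, f t x) (Icc a b) := by
  obtain ⟨Y, -, hY⟩ := exists_abs_le_of_continuousOn_uncurry hf
  intro t ht
  apply intervalIntegral.continuousWithinAt_of_dominated_interval (bound := fun _ => Y)
  · filter_upwards [self_mem_nhdsWithin] with s hs
    rw [uIoc_of_le hL]
    exact ((hf.uncurry_left s hs).mono Ioc_subset_Icc_self).aestronglyMeasurable measurableSet_Ioc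
  · filter_upwards [self_mem_nhdsWithin] with s hs
    refine ae_of_all _ fun x hx => ?_
    rw [uIoc_of_le hL] at hx
    exact hY s hs x (Ioc_subset_Icc_self hx)
  · simp
  · refine ae_of_all _ fun x hx => ?_
    rw [uIoc_of_le hL] at hx
    exact hf.uncurry_right x (Ioc_subset_Icc_self hx) t ht

/-- `g` is the time derivative of the family `f` on `[a, b] × [0, L]`, in a sense weak enough to
allow derivatives `g` which are only separately continuous, but strong enough to differentiate
`∫ f t` under the integral sign: in place of joint continuity, `g t` has locally bounded
`L¹` norm. -/
structure HasTimeDerivOn (L a b : ℝ) (f g : ℝ → ℝ → ℝ) : Prop where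
  continuousOn : ContinuousOn (Function.uncurry f) (Icc a b ×ˢ Icc 0 L)
  continuousOn_space : ∀ t ∈ Icc a b, ContinuousOn (g t) (Icc 0 L)
  continuousOn_time : ∀ x ∈ Ioo 0 L, ContinuousOn (fun t => g t x) (Icc a b)
  hasDerivAt : ∀ t ∈ Ioo a b, ∀ x ∈ Ioo 0 L, HasDerivAt (fun s => f s x) (g t x) t
  exists_bound : ∃ C, ∀ t ∈ Icc a b, ∫ x in (0 : ℝ)..L, |g t x| ≤ C

namespace HasTimeDerivOn

theorem mono {a' b' : ℝ} (h : HasTimeDerivOn L a b f g) (ha : a ≤ a') (hb : b' ≤ b) :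
    HasTimeDerivOn L a' b' f g where
  continuousOn := h.continuousOn.mono (prod_mono_left (Icc_subset_Icc ha hb))
  continuousOn_space t ht := h.continuousOn_space t (Icc_subset_Icc ha hb ht)
  continuousOn_time x hx := (h.continuousOn_time x hx).mono (Icc_subset_Icc ha hb)
  hasDerivAt t ht := h.hasDerivAt t (Ioo_subset_Ioo ha hb ht)
  exists_bound := h.exists_bound.imp fun _ hC t ht => hC t (Icc_subset_Icc ha hb ht)

theorem comp_add_const {h : ℝ} (hf : HasTimeDerivOn L (a + h) (b + h) f g) :
    HasTimeDerivOn L a b (fun t => f (t + h)) (fun t => g (t + h)) where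
  continuousOn := hf.continuousOn.comp (f := fun p : ℝ × ℝ => (p.1 + h, p.2)) (by fun_prop)
    fun p hp => ⟨by simpa using hp.1, hp.2⟩
  continuousOn_space t ht := hf.continuousOn_space (t + h) (by simpa using ht)
  continuousOn_time x hx := (hf.continuousOn_time x hx).comp (f := fun t => t + h) (by fun_prop)
    fun t ht => by simpa using ht
  hasDerivAt t ht x hx := (hf.hasDerivAt (t + h) (by simpa using ht) x hx).comp_add_const t h
  exists_bound := hf.exists_bound.imp fun _ hC t ht => hC (t + h) (by simpa using ht)

theorem of_time {α α' : ℝ → ℝ} (hα : ContinuousOn α (Icc a b)) (hα' : ContinuousOn α' (Icc a b))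
    (hd : ∀ t ∈ Ioo a b, HasDerivAt α (α' t) t) :
    HasTimeDerivOn L a b (fun t _ => α t) (fun t _ => α' t) where
  continuousOn := hα.comp continuousOn_fst fun _ hp => hp.1
  continuousOn_space _ _ := continuousOn_const
  continuousOn_time _ _ := hα'
  hasDerivAt t ht _ _ := hd t ht
  exists_bound := by
    obtain ⟨C, hC⟩ := isCompact_Icc.exists_bound_of_continuousOn
      (continuousOn_const (c := L).mul hα'.abs)
    exact ⟨C, fun t ht => by simpa using (le_abs_self _).trans (hC t ht)⟩

theorem const {ρ : ℝ → ℝ} (hρ : ContinuousOn ρ (Icc 0 L)) :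
    HasTimeDerivOn L a b (fun _ => ρ) (fun _ _ => 0) where
  continuousOn := hρ.comp continuousOn_snd fun _ hp => hp.2
  continuousOn_space _ _ := continuousOn_const
  continuousOn_time _ _ := continuousOn_const
  hasDerivAt _ _ _ _ := hasDerivAt_const _ _
  exists_bound := ⟨0, by simp⟩

theorem continuousOn_slice (h : HasTimeDerivOn L a b f g) {t : ℝ} (ht : t ∈ Icc a b) :
    ContinuousOn (f t) (Icc 0 L) :=
  h.continuousOn.uncurry_left t ht

theorem add (hL : 0 ≤ L) (h₁ : HasTimeDerivOn L a b f₁ g₁) (h₂ : HasTimeDerivOn L a b f₂ g₂) :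
    HasTimeDerivOn L a b (fun t x => f₁ t x + f₂ t x) (fun t x => g₁ t x + g₂ t x) where
  continuousOn := h₁.continuousOn.add h₂.continuousOn
  continuousOn_space t ht := (h₁.continuousOn_space t ht).add (h₂.continuousOn_space t ht)
  continuousOn_time x hx := (h₁.continuousOn_time x hx).add (h₂.continuousOn_time x hx)
  hasDerivAt t ht x hx := (h₁.hasDerivAt t ht x hx).add (h₂.hasDerivAt t ht x hx)
  exists_bound := by
    obtain ⟨C₁, hC₁⟩ := h₁.exists_bound
    obtain ⟨C₂, hC₂⟩ := h₂.exists_bound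
    refine ⟨C₁ + C₂, fun t ht => ?_⟩
    have c₁ := h₁.continuousOn_space t ht
    have c₂ := h₂.continuousOn_space t ht
    calc ∫ x in (0 : ℝ)..L, |g₁ t x + g₂ t x|
        ≤ ∫ x in (0 : ℝ)..L, (|g₁ t x| + |g₂ t x|) :=
          integral_mono_of_continuousOn hL (by fun_prop) (by fun_prop) fun x _ => abs_add_le _ _
      _ = (∫ x in (0 : ℝ)..L, |g₁ t x|) + ∫ x in (0 : ℝ)..L, |g₂ t x| :=
          integral_add_of_continuousOn hL c₁.abs c₂.abs
      _ ≤ C₁ + C₂ := add_le_add (hC₁ t ht) (hC₂ t ht)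

theorem mul (hL : 0 ≤ L) (h₁ : HasTimeDerivOn L a b f₁ g₁) (h₂ : HasTimeDerivOn L a b f₂ g₂) :
    HasTimeDerivOn L a b (fun t x => f₁ t x * f₂ t x)
      (fun t x => g₁ t x * f₂ t x + f₁ t x * g₂ t x) where
  continuousOn := h₁.continuousOn.mul h₂.continuousOn
  continuousOn_space t ht := ((h₁.continuousOn_space t ht).mul (h₂.continuousOn_slice ht)).add
    ((h₁.continuousOn_slice ht).mul (h₂.continuousOn_space t ht))
  continuousOn_time x hx :=
    ((h₁.continuousOn_time x hx).mul
      (h₂.continuousOn.uncurry_right x (Ioo_subset_Icc_self hx))).add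
    ((h₁.continuousOn.uncurry_right x (Ioo_subset_Icc_self hx)).mul (h₂.continuousOn_time x hx))
  hasDerivAt t ht x hx := (h₁.hasDerivAt t ht x hx).mul (h₂.hasDerivAt t ht x hx)
  exists_bound := by
    obtain ⟨C₁, hC₁⟩ := h₁.exists_bound
    obtain ⟨C₂, hC₂⟩ := h₂.exists_bound
    obtain ⟨Y₁, hY₁, hf₁⟩ := exists_abs_le_of_continuousOn_uncurry h₁.continuousOn
    obtain ⟨Y₂, hY₂, hf₂⟩ := exists_abs_le_of_continuousOn_uncurry h₂.continuousOn
    refine ⟨Y₂ * C₁ + Y₁ * C₂, fun t ht => ?_⟩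
    have c₁ := h₁.continuousOn_space t ht
    have c₂ := h₂.continuousOn_space t ht
    have hf₁t := h₁.continuousOn_slice ht
    have hf₂t := h₂.continuousOn_slice ht
    calc ∫ x in (0 : ℝ)..L, |g₁ t x * f₂ t x + f₁ t x * g₂ t x|
        ≤ ∫ x in (0 : ℝ)..L, (Y₂ * |g₁ t x| + Y₁ * |g₂ t x|) := by
          refine integral_mono_of_continuousOn hL (by fun_prop) (by fun_prop)
            fun x hx => (abs_add_le _ _).trans ?_
          rw [abs_mul, abs_mul, mul_comm |g₁ t x|]
          gcongr
          exacts [hf₂ t ht x hx, hf₁ t ht x hx]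
      _ = Y₂ * (∫ x in (0 : ℝ)..L, |g₁ t x|) + Y₁ * ∫ x in (0 : ℝ)..L, |g₂ t x| := by
          rw [integral_add_of_continuousOn hL (by fun_prop) (by fun_prop),
            intervalIntegral.integral_const_mul, intervalIntegral.integral_const_mul]
      _ ≤ Y₂ * C₁ + Y₁ * C₂ := by
          gcongr
          exacts [hC₁ t ht, hC₂ t ht]

theorem congr_deriv (h : HasTimeDerivOn L a b f g₁) (hg : ∀ t x, g₁ t x = g₂ t x) :
    HasTimeDerivOn L a b f g₂ :=
  (funext₂ hg : g₁ = g₂) ▸ h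

theorem sub (hL : 0 ≤ L) (h₁ : HasTimeDerivOn L a b f₁ g₁) (h₂ : HasTimeDerivOn L a b f₂ g₂) :
    HasTimeDerivOn L a b (fun t x => f₁ t x - f₂ t x) (fun t x => g₁ t x - g₂ t x) := by
  simpa [sub_eq_add_neg] using h₁.add hL ((const (ρ := fun _ => -1) continuousOn_const).mul hL h₂)

theorem weighted_sq {ρ : ℝ → ℝ} (hL : 0 ≤ L) (hρ : ContinuousOn ρ (Icc 0 L))
    (h : HasTimeDerivOn L a b f g) :
    HasTimeDerivOn L a b (fun t x => ρ x * f t x ^ 2) (fun t x => 2 * ρ x * f t x * g t x) := by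
  simpa only [sq] using ((const hρ).mul hL (h.mul hL h)).congr_deriv fun t x => by ring

theorem aestronglyMeasurable (hab : a ≤ b) (h : HasTimeDerivOn L a b f g) :
    AEStronglyMeasurable (Function.uncurry g)
      ((volume.restrict (Ioc a b)).prod (volume.restrict (Ioo 0 L))) := by
  classical
  let G : ℝ → ℝ → ℝ := fun t => (Ioo 0 L).piecewise (g (projIcc a b hab t)) fun _ => 0
  have hG : Measurable (Function.uncurry G) := by
    refine measurable_uncurry_of_continuous_of_measurable (fun x => ?_) fun t =>
      ContinuousOn.measurable_piecewise ((h.continuousOn_space _ (projIcc a b hab t).2).mono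
        Ioo_subset_Icc_self) continuousOn_const measurableSet_Ioo
    by_cases hx : x ∈ Ioo 0 L
    · simp only [G, piecewise_eq_of_mem _ _ _ hx]
      exact (h.continuousOn_time x hx).comp_continuous
        (continuous_subtype_val.comp continuous_projIcc) fun t => (projIcc a b hab t).2
    · simpa only [G, piecewise_eq_of_notMem _ _ _ hx] using continuous_const
  refine ⟨Function.uncurry G, hG.stronglyMeasurable, ?_⟩
  rw [Measure.prod_restrict]
  filter_upwards [ae_restrict_mem (measurableSet_Ioc.prod measurableSet_Ioo)] with p hp
  simp only [Function.uncurry, G, piecewise_eq_of_mem _ _ _ hp.2,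
    projIcc_of_mem hab (Ioc_subset_Icc_self hp.1)]

theorem integrable (hL : 0 ≤ L) (hab : a ≤ b) (h : HasTimeDerivOn L a b f g) :
    Integrable (Function.uncurry g)
      ((volume.restrict (Ioc a b)).prod (volume.restrict (Ioo 0 L))) := by
  obtain ⟨C, hC⟩ := h.exists_bound
  have hg := h.aestronglyMeasurable hab
  refine (integrable_prod_iff hg).2 ⟨?_, ?_⟩
  · filter_upwards [ae_restrict_mem measurableSet_Ioc] with t ht
    exact (h.continuousOn_space t (Ioc_subset_Icc_self ht)).integrableOn_Icc.mono_set
      Ioo_subset_Icc_self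
  · refine Integrable.of_bound hg.norm.integral_prod_right' C ?_
    filter_upwards [ae_restrict_mem measurableSet_Ioc] with t ht
    rw [Real.norm_of_nonneg (integral_nonneg fun _ => norm_nonneg _),
      ← integral_Ioc_eq_integral_Ioo,
      ← intervalIntegral.integral_of_le hL]
    exact hC t (Ioc_subset_Icc_self ht)

theorem intervalIntegrable_integral (hL : 0 ≤ L) (hab : a ≤ b) (h : HasTimeDerivOn L a b f g) :
    IntervalIntegrable (fun t => ∫ x in (0 : ℝ)..L, g t x) volume a b := by
  simp_rw [intervalIntegrable_iff_integrableOn_Ioc_of_le hab, intervalIntegral.integral_of_le hL,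
    integral_Ioc_eq_integral_Ioo]
  exact (h.integrable hL hab).integral_prod_left

theorem integral_sub_integral (hL : 0 ≤ L) (hab : a ≤ b) (h : HasTimeDerivOn L a b f g) :
    (∫ x in (0 : ℝ)..L, f b x) - ∫ x in (0 : ℝ)..L, f a x
      = ∫ t in a..b, ∫ x in (0 : ℝ)..L, g t x := by
  have ftc (x : ℝ) (hx : x ∈ Ioo 0 L) : f b x - f a x = ∫ t in Ioc a b, g t x := by
    rw [← intervalIntegral.integral_of_le hab]
    exact (intervalIntegral.integral_eq_sub_of_hasDerivAt_of_le hab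
      (h.continuousOn.uncurry_right x (Ioo_subset_Icc_self hx))
      (fun t ht => h.hasDerivAt t ht x hx)
      ((h.continuousOn_time x hx).intervalIntegrable_of_Icc hab)).symm
  rw [← integral_sub_of_continuousOn hL (h.continuousOn_slice (right_mem_Icc.2 hab))
    (h.continuousOn_slice (left_mem_Icc.2 hab))]
  have toIoo (F : ℝ → ℝ) : ∫ x in (0 : ℝ)..L, F x = ∫ x in Ioo 0 L, F x := by
    rw [intervalIntegral.integral_of_le hL, integral_Ioc_eq_integral_Ioo]
  simp_rw [toIoo, intervalIntegral.integral_of_le hab]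
  rw [integral_integral_swap (h.integrable hL hab)]
  exact setIntegral_congr_fun measurableSet_Ioo ftc

theorem integral_sub_integral_le {c : ℝ} (hL : 0 ≤ L) (hab : a ≤ b)
    (h : HasTimeDerivOn L a b f g) (hc : ∀ t ∈ Icc a b, ∫ x in (0 : ℝ)..L, g t x ≤ c) :
    (∫ x in (0 : ℝ)..L, f b x) - ∫ x in (0 : ℝ)..L, f a x ≤ c * (b - a) := by
  rw [h.integral_sub_integral hL hab]
  calc ∫ t in a..b, ∫ x in (0 : ℝ)..L, g t x
      ≤ ∫ _ in a..b, c := intervalIntegral.integral_mono_on hab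
        (h.intervalIntegrable_integral hL hab) intervalIntegrable_const hc
    _ = c * (b - a) := by simp [mul_comm]

theorem integral_sub_integral_le_of_Ioc {c : ℝ} (hL : 0 ≤ L) (hab : a < b)
    (hf : ContinuousOn (Function.uncurry f) (Icc a b ×ˢ Icc 0 L))
    (h : ∀ a' ∈ Ioo a b, HasTimeDerivOn L a' b f g)
    (hc : ∀ t ∈ Ioc a b, ∫ x in (0 : ℝ)..L, g t x ≤ c) :
    (∫ x in (0 : ℝ)..L, f b x) - ∫ x in (0 : ℝ)..L, f a x ≤ c * (b - a) := by
  have : (nhdsWithin a (Ioo a b)).NeBot := left_nhdsWithin_Ioo_neBot hab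
  have hlim : Tendsto (fun a' => ∫ x in (0 : ℝ)..L, f a' x) (nhdsWithin a (Ioo a b))
      (nhds (∫ x in (0 : ℝ)..L, f a x)) :=
    ((continuousOn_integral_of_continuousOn_uncurry hL hf a (left_mem_Icc.2 hab.le)).mono
      Ioo_subset_Icc_self).tendsto
  have hlin : Tendsto (fun a' => c * (b - a')) (nhdsWithin a (Ioo a b)) (nhds (c * (b - a))) :=
    (Continuous.tendsto (by fun_prop) a).mono_left nhdsWithin_le_nhds
  refine le_of_tendsto_of_tendsto (hlim.const_sub _) hlin ?_
  filter_upwards [self_mem_nhdsWithin] with a' ha'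
  exact (h a' ha').integral_sub_integral_le hL ha'.2.le fun t ht =>
    hc t ⟨ha'.1.trans_le ht.1, ht.2⟩

theorem hasDerivAt_integral (hL : 0 ≤ L) (h : HasTimeDerivOn L a b f g)
    (hg : ContinuousOn (fun t => ∫ x in (0 : ℝ)..L, g t x) (Icc a b)) {t : ℝ} (ht : t ∈ Ioo a b) :
    HasDerivAt (fun s => ∫ x in (0 : ℝ)..L, f s x) (∫ x in (0 : ℝ)..L, g t x) t := by
  have primitive (s : ℝ) (hs : s ∈ Icc a b) : ∫ x in (0 : ℝ)..L, f s x
      = (∫ r in a..s, ∫ x in (0 : ℝ)..L, g r x) + ∫ x in (0 : ℝ)..L, f a x :=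
    sub_eq_iff_eq_add.1 ((h.mono le_rfl hs.2).integral_sub_integral hL hs.1)
  have hd : HasDerivAt (fun s => ∫ r in a..s, ∫ x in (0 : ℝ)..L, g r x)
      (∫ x in (0 : ℝ)..L, g t x) t :=
    intervalIntegral.integral_hasDerivAt_right
      ((hg.mono (Icc_subset_Icc_right ht.2.le)).intervalIntegrable_of_Icc ht.1.le)
      ((hg.mono Ioo_subset_Icc_self).stronglyMeasurableAtFilter isOpen_Ioo t ht)
      (hg.continuousAt (Icc_mem_nhds ht.1 ht.2))
  refine (hd.add_const (∫ x in (0 : ℝ)..L, f a x)).congr_of_eventuallyEq ?_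
  filter_upwards [Icc_mem_nhds ht.1 ht.2] with s hs using primitive s hs

end HasTimeDerivOn

theorem weighted_gronwall {ρ : ℝ → ℝ} {u v : ℝ → ℝ → ℝ} {K c : ℝ} (hL : 0 ≤ L) (hab : a < b)
    (hK : 0 ≤ K) (hc : 0 ≤ c) (hρ : ContinuousOn ρ (Icc 0 L))
    (hu : ContinuousOn (Function.uncurry u) (Icc a b ×ˢ Icc 0 L))
    (huv : ∀ a' ∈ Ioo a b, HasTimeDerivOn L a' b u v)
    (hdiss : ∀ t ∈ Ioc a b, ∫ x in (0 : ℝ)..L, 2 * ρ x * u t x * v t x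
      ≤ K * (∫ x in (0 : ℝ)..L, ρ x * u t x ^ 2) + c) :
    ∫ x in (0 : ℝ)..L, ρ x * u b x ^ 2
      ≤ exp (K * (b - a)) * ((∫ x in (0 : ℝ)..L, ρ x * u a x ^ 2) + c * (b - a)) := by
  let E : ℝ → ℝ := fun t => exp (-(K * (t - a)))
  have hE (t : ℝ) : HasDerivAt E (-K * E t) t := by
    have := ((((hasDerivAt_id t).sub_const a).const_mul K).neg).exp
    simpa [E, mul_comm] using this
  have hEc : Continuous E := by fun_prop
  have huρ : ContinuousOn (Function.uncurry fun t x => E t * (ρ x * u t x ^ 2))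
      (Icc a b ×ˢ Icc 0 L) :=
    (hEc.comp continuous_fst).continuousOn.mul
      ((hρ.comp continuousOn_snd fun _ hp => hp.2).mul (hu.pow 2))
  have hderiv (a' : ℝ) (ha' : a' ∈ Ioo a b) : HasTimeDerivOn L a' b
      (fun t x => E t * (ρ x * u t x ^ 2))
      (fun t x => E t * (2 * ρ x * u t x * v t x - K * (ρ x * u t x ^ 2))) :=
    ((HasTimeDerivOn.of_time hEc.continuousOn (hEc.const_mul (-K)).continuousOn
      fun t _ => hE t).mul hL ((huv a' ha').weighted_sq hL hρ)).congr_deriv fun t x => by ring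
  have hle (t : ℝ) (ht : t ∈ Ioc a b) : ∫ x in (0 : ℝ)..L,
      E t * (2 * ρ x * u t x * v t x - K * (ρ x * u t x ^ 2)) ≤ c := by
    obtain ⟨a', ha', hta'⟩ := exists_between ht.1
    have hd := huv a' ⟨ha', hta'.trans_le ht.2⟩
    have hut := hd.continuousOn_slice ⟨hta'.le, ht.2⟩
    have hvt := hd.continuousOn_space t ⟨hta'.le, ht.2⟩
    rw [intervalIntegral.integral_const_mul,
      integral_sub_of_continuousOn hL (by fun_prop) (by fun_prop),
      intervalIntegral.integral_const_mul]
    have hE1 : E t ≤ 1 := exp_le_one_iff.2 (by nlinarith [ht.1])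
    nlinarith [hdiss t ht, (exp_pos (-(K * (t - a)))).le]
  have key := HasTimeDerivOn.integral_sub_integral_le_of_Ioc hL hab huρ hderiv hle
  simp only [intervalIntegral.integral_const_mul] at key
  have hEa : E a = 1 := by simp [E]
  have hEb : E b = (exp (K * (b - a)))⁻¹ := exp_neg _
  rw [hEa, hEb, one_mul, sub_le_iff_le_add', inv_mul_le_iff₀ (exp_pos _)] at key
  exact key

end TimeDerivative

theorem integral_add_eq_sub_add_of_hasDerivAt {a b : ℝ} {F F' R : ℝ → ℝ} (hab : a ≤ b)
    (hF : ContinuousOn F (Icc a b)) (hF' : ContinuousOn F' (Icc a b))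
    (hR : ContinuousOn R (Icc a b)) (hd : ∀ x ∈ Ioo a b, HasDerivAt F (F' x) x) :
    ∫ x in a..b, (F' x + R x) = F b - F a + ∫ x in a..b, R x := by
  rw [integral_add_of_continuousOn hab hF' hR,
    intervalIntegral.integral_eq_sub_of_hasDerivAt_of_le hab hF hd
      (hF'.intervalIntegrable_of_Icc hab)]

/-- A `C³` profile on `[0, L]` satisfying the boundary conditions of the KdV system, together with
its derivatives `f₁`, `f₂`, `f₃`, which are one-sided at the endpoints. -/
structure IsProfile (L : ℝ) (f f₁ f₂ f₃ : ℝ → ℝ) : Prop where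
  cont : ContinuousOn f (Icc 0 L)
  cont₁ : ContinuousOn f₁ (Icc 0 L)
  cont₂ : ContinuousOn f₂ (Icc 0 L)
  cont₃ : ContinuousOn f₃ (Icc 0 L)
  hasDerivAt : ∀ x ∈ Ioo 0 L, HasDerivAt f (f₁ x) x
  hasDerivAt₁ : ∀ x ∈ Ioo 0 L, HasDerivAt f₁ (f₂ x) x
  hasDerivAt₂ : ∀ x ∈ Ioo 0 L, HasDerivAt f₂ (f₃ x) x
  left : f 0 = 0
  right : f L = 0
  right_deriv : f₁ L = 0

/-- The KdV vector field `-(f' + f f' + f''')`, as a function of `f`, `f₁ = f'` and `f₃ = f'''`. -/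
def kdvField (f f₁ f₃ : ℝ → ℝ) (x : ℝ) : ℝ :=
  -(f₁ x + f x * f₁ x + f₃ x)

/-- The growth rate of `∫ (1 + x) (f - g)²` for two solutions `f`, `g` of the KdV system on
`[0, L]` which are bounded by `Y`. -/
def kdvGrowthRate (L Y : ℝ) : ℝ :=
  1 + 2 * Y + (1 + L) * Y ^ 2

namespace IsProfile

variable {L Y : ℝ} {f f₁ f₂ f₃ g g₁ g₂ g₃ : ℝ → ℝ}

theorem const_mul (hf : IsProfile L f f₁ f₂ f₃) (c : ℝ) :
    IsProfile L (fun x => c * f x) (fun x => c * f₁ x) (fun x => c * f₂ x) (fun x => c * f₃ x) where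
  cont := hf.cont.const_mul c
  cont₁ := hf.cont₁.const_mul c
  cont₂ := hf.cont₂.const_mul c
  cont₃ := hf.cont₃.const_mul c
  hasDerivAt x hx := (hf.hasDerivAt x hx).const_mul c
  hasDerivAt₁ x hx := (hf.hasDerivAt₁ x hx).const_mul c
  hasDerivAt₂ x hx := (hf.hasDerivAt₂ x hx).const_mul c
  left := by simp [hf.left]
  right := by simp [hf.right]
  right_deriv := by simp [hf.right_deriv]

theorem add (hf : IsProfile L f f₁ f₂ f₃) (hg : IsProfile L g g₁ g₂ g₃) :
    IsProfile L (fun x => f x + g x) (fun x => f₁ x + g₁ x) (fun x => f₂ x + g₂ x)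
      (fun x => f₃ x + g₃ x) where
  cont := hf.cont.add hg.cont
  cont₁ := hf.cont₁.add hg.cont₁
  cont₂ := hf.cont₂.add hg.cont₂
  cont₃ := hf.cont₃.add hg.cont₃
  hasDerivAt x hx := (hf.hasDerivAt x hx).add (hg.hasDerivAt x hx)
  hasDerivAt₁ x hx := (hf.hasDerivAt₁ x hx).add (hg.hasDerivAt₁ x hx)
  hasDerivAt₂ x hx := (hf.hasDerivAt₂ x hx).add (hg.hasDerivAt₂ x hx)
  left := by simp [hf.left, hg.left]
  right := by simp [hf.right, hg.right]
  right_deriv := by simp [hf.right_deriv, hg.right_deriv]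

theorem sub (hf : IsProfile L f f₁ f₂ f₃) (hg : IsProfile L g g₁ g₂ g₃) :
    IsProfile L (fun x => f x - g x) (fun x => f₁ x - g₁ x) (fun x => f₂ x - g₂ x)
      (fun x => f₃ x - g₃ x) := by
  simpa [sub_eq_add_neg] using hf.add (hg.const_mul (-1))

theorem continuousOn_kdvField (hf : IsProfile L f f₁ f₂ f₃) :
    ContinuousOn (kdvField f f₁ f₃) (Icc 0 L) :=
  ((hf.cont₁.add (hf.cont.mul hf.cont₁)).add hf.cont₃).neg

/-- Multiplying by `2f` makes the field the derivative of `f₁² - f² - 2f³/3 - 2f f₂`. -/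
theorem integral_two_mul_kdvField (hL : 0 ≤ L) (hf : IsProfile L f f₁ f₂ f₃) :
    ∫ x in (0 : ℝ)..L, 2 * f x * kdvField f f₁ f₃ x = -f₁ 0 ^ 2 := by
  obtain ⟨c, c₁, c₂, c₃, d, d₁, d₂, hl, hr, hr₁⟩ := hf
  let F : ℝ → ℝ := fun x => f₁ x ^ 2 - f x ^ 2 - 2 / 3 * f x ^ 3 - 2 * (f x * f₂ x)
  have hF (x : ℝ) (hx : x ∈ Ioo 0 L) : HasDerivAt F (2 * f x * kdvField f f₁ f₃ x) x := by
    refine HasDerivAt.congr_deriv (((((d₁ x hx).pow 2).sub ((d x hx).pow 2)).sub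
      (((d x hx).pow 3).const_mul (2 / 3))).sub (((d x hx).mul (d₂ x hx)).const_mul 2)) ?_
    simp only [kdvField]
    ring
  rw [intervalIntegral.integral_eq_sub_of_hasDerivAt_of_le hL (by fun_prop) hF
    (ContinuousOn.intervalIntegrable_of_Icc hL (by unfold kdvField; fun_prop))]
  simp [F, hl, hr, hr₁]

/-- The Kato smoothing identity for a difference of two profiles: the weight `1 + x` produces the
dissipation `3 (f₁ - g₁)²`. -/
theorem integral_weighted_kdvField_sub (hL : 0 ≤ L) (hf : IsProfile L f f₁ f₂ f₃)
    (hg : IsProfile L g g₁ g₂ g₃) :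
    ∫ x in (0 : ℝ)..L, 2 * (1 + x) * (f x - g x) * (kdvField f f₁ f₃ x - kdvField g g₁ g₃ x)
      = -(f₁ 0 - g₁ 0) ^ 2 + ∫ x in (0 : ℝ)..L, (-3 * (f₁ x - g₁ x) ^ 2 + (f x - g x) ^ 2
        + ((f x - g x) + (1 + x) * (f₁ x - g₁ x)) * (f x + g x) * (f x - g x)) := by
  obtain ⟨c, c₁, c₂, -, d, d₁, d₂, hl, hr, hr₁⟩ := hf.sub hg
  have s := hf.add hg
  have cs := s.cont
  let F : ℝ → ℝ := fun x => 2 * ((f x - g x) * (f₁ x - g₁ x)) + (1 + x) *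
    ((f₁ x - g₁ x) ^ 2 - (f x - g x) ^ 2 - (f x + g x) * (f x - g x) ^ 2
      - 2 * ((f x - g x) * (f₂ x - g₂ x)))
  have hF : F L - F 0 = -(f₁ 0 - g₁ 0) ^ 2 := by simp [F, hl, hr, hr₁]
  let R : ℝ → ℝ := fun x => -3 * (f₁ x - g₁ x) ^ 2 + (f x - g x) ^ 2
    + ((f x - g x) + (1 + x) * (f₁ x - g₁ x)) * (f x + g x) * (f x - g x)
  have hd (x : ℝ) (hx : x ∈ Ioo 0 L) : HasDerivAt F
      (2 * (1 + x) * (f x - g x) * (kdvField f f₁ f₃ x - kdvField g g₁ g₃ x) - R x) x := by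
    refine HasDerivAt.congr_deriv ((((d x hx).mul (d₁ x hx)).const_mul 2).add
      (((hasDerivAt_id x).const_add 1).mul
        (((((d₁ x hx).pow 2).sub ((d x hx).pow 2)).sub
          ((s.hasDerivAt x hx).mul ((d x hx).pow 2))).sub
            (((d x hx).mul (d₂ x hx)).const_mul 2)))) ?_
    simp only [kdvField, R, Pi.pow_apply, id]
    ring
  have hfield : ContinuousOn (fun x => kdvField f f₁ f₃ x - kdvField g g₁ g₃ x) (Icc 0 L) :=
    hf.continuousOn_kdvField.sub hg.continuousOn_kdvField
  rw [← hF, ← integral_add_eq_sub_add_of_hasDerivAt hL (by fun_prop) (by fun_prop)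
    (R := R) (by fun_prop) hd]
  simp only [sub_add_cancel]

theorem integral_weighted_kdvField_sub_le (hL : 0 ≤ L) (hf : IsProfile L f f₁ f₂ f₃)
    (hg : IsProfile L g g₁ g₂ g₃) (hfY : ∀ x ∈ Icc 0 L, |f x| ≤ Y)
    (hgY : ∀ x ∈ Icc 0 L, |g x| ≤ Y) :
    ∫ x in (0 : ℝ)..L, 2 * (1 + x) * (f x - g x) * (kdvField f f₁ f₃ x - kdvField g g₁ g₃ x)
      ≤ kdvGrowthRate L Y * ∫ x in (0 : ℝ)..L, (1 + x) * (f x - g x) ^ 2 := by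
  obtain ⟨c, c₁, -, -, -, -, -, -, -, -⟩ := hf.sub hg
  have cs := (hf.add hg).cont
  rw [integral_weighted_kdvField_sub hL hf hg, kdvGrowthRate,
    ← intervalIntegral.integral_const_mul]
  refine (add_le_of_nonpos_left (neg_nonpos.2 (sq_nonneg _))).trans
    (integral_mono_of_continuousOn hL (by fun_prop) (by fun_prop) fun x hx => ?_)
  have hS : |f x + g x| ≤ 2 * Y := (abs_add_le _ _).trans (by linarith [hfY x hx, hgY x hx])
  generalize f x - g x = w, f₁ x - g₁ x = w₁, f x + g x = S at *
  obtain ⟨hx0, hxL⟩ := hx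
  have hY : 0 ≤ Y := by linarith [abs_nonneg S]
  have hquad : S * w ^ 2 ≤ 2 * Y * w ^ 2 := by gcongr; exact (le_abs_self S).trans hS
  have hS2 : S ^ 2 ≤ 4 * Y ^ 2 := by nlinarith [sq_abs S, abs_nonneg S]
  have hcross : (1 + x) * w₁ * S * w ≤ 3 * w₁ ^ 2 + (1 + x) ^ 2 * Y ^ 2 * w ^ 2 := by
    have young : 2 * ((1 + x) * w₁ * S * w) ≤ 4 * w₁ ^ 2 + (1 + x) ^ 2 * S ^ 2 * w ^ 2 / 4 := by
      nlinarith [sq_nonneg (2 * w₁ - (1 + x) * S * w / 2)]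
    have : (1 + x) ^ 2 * S ^ 2 * w ^ 2 ≤ (1 + x) ^ 2 * (4 * Y ^ 2) * w ^ 2 := by gcongr
    have : 0 ≤ (1 + x) ^ 2 * Y ^ 2 * w ^ 2 := by positivity
    nlinarith [sq_nonneg w₁]
  have hweight₁ : (1 + 2 * Y) * w ^ 2 ≤ (1 + 2 * Y) * ((1 + x) * w ^ 2) := by
    gcongr; nlinarith [sq_nonneg w]
  have hweight₂ : (1 + x) ^ 2 * Y ^ 2 * w ^ 2 ≤ (1 + L) * Y ^ 2 * ((1 + x) * w ^ 2) :=
    calc (1 + x) ^ 2 * Y ^ 2 * w ^ 2 = (1 + x) * Y ^ 2 * ((1 + x) * w ^ 2) := by ring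
      _ ≤ (1 + L) * Y ^ 2 * ((1 + x) * w ^ 2) := by gcongr
  linarith

theorem integral_weighted_sub_mul_kdvField_le {e : ℝ} (hL : 0 ≤ L) (he : 0 < e)
    (hf : IsProfile L f f₁ f₂ f₃) (hg : IsProfile L g g₁ g₂ g₃)
    (hfY : ∀ x ∈ Icc 0 L, |f x| ≤ Y) (hgY : ∀ x ∈ Icc 0 L, |g x| ≤ Y) :
    ∫ x in (0 : ℝ)..L, 2 * (1 + x) * (f x - g x) * kdvField f f₁ f₃ x
      ≤ (kdvGrowthRate L Y + e⁻¹) * (∫ x in (0 : ℝ)..L, (1 + x) * (f x - g x) ^ 2)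
        + (1 + L) * e * ∫ x in (0 : ℝ)..L, kdvField g g₁ g₃ x ^ 2 := by
  have cw := (hf.sub hg).cont
  have cf := hf.continuousOn_kdvField
  have cg := hg.continuousOn_kdvField
  have hcross : ∫ x in (0 : ℝ)..L, 2 * (1 + x) * (f x - g x) * kdvField g g₁ g₃ x
      ≤ e⁻¹ * (∫ x in (0 : ℝ)..L, (1 + x) * (f x - g x) ^ 2)
        + (1 + L) * e * ∫ x in (0 : ℝ)..L, kdvField g g₁ g₃ x ^ 2 := by
    rw [← intervalIntegral.integral_const_mul, ← intervalIntegral.integral_const_mul,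
      ← integral_add_of_continuousOn hL (by fun_prop) (by fun_prop)]
    refine integral_mono_of_continuousOn hL (by fun_prop) (by fun_prop) fun x ⟨hx0, hxL⟩ => ?_
    generalize f x - g x = w, kdvField g g₁ g₃ x = v
    have young : 2 * w * v ≤ e⁻¹ * w ^ 2 + e * v ^ 2 := by
      have : e⁻¹ * w ^ 2 + e * v ^ 2 - 2 * w * v = e⁻¹ * (w - e * v) ^ 2 := by field_simp; ring
      have : 0 ≤ e⁻¹ * (w - e * v) ^ 2 := by positivity
      linarith
    calc 2 * (1 + x) * w * v = (1 + x) * (2 * w * v) := by ring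
      _ ≤ (1 + x) * (e⁻¹ * w ^ 2 + e * v ^ 2) := by gcongr
      _ = e⁻¹ * ((1 + x) * w ^ 2) + (1 + x) * e * v ^ 2 := by ring
      _ ≤ e⁻¹ * ((1 + x) * w ^ 2) + (1 + L) * e * v ^ 2 := by gcongr
  calc ∫ x in (0 : ℝ)..L, 2 * (1 + x) * (f x - g x) * kdvField f f₁ f₃ x
      = (∫ x in (0 : ℝ)..L,
          2 * (1 + x) * (f x - g x) * (kdvField f f₁ f₃ x - kdvField g g₁ g₃ x))
        + ∫ x in (0 : ℝ)..L, 2 * (1 + x) * (f x - g x) * kdvField g g₁ g₃ x := by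
        rw [← integral_add_of_continuousOn hL (by fun_prop) (by fun_prop)]
        simp only [mul_sub, sub_add_cancel]
    _ ≤ _ := by linarith [integral_weighted_kdvField_sub_le hL hf hg hfY hgY]

end IsProfile

theorem integral_le_of_tendsto_of_forall_integral_le {α ι : Type*} [MeasurableSpace α]
    {μ : Measure α} {u : Filter ι} [u.NeBot] [u.IsCountablyGenerated] {F : ι → α → ℝ} {G : α → ℝ}
    {M : ℝ} (hF : ∀ i, Integrable (F i) μ) (hF0 : ∀ᵐ x ∂μ, ∀ i, 0 ≤ F i x)
    (hlim : ∀ᵐ x ∂μ, Tendsto (fun i => F i x) u (nhds (G x))) (hM : ∀ i, ∫ x, F i x ∂μ ≤ M) :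
    ∫ x, G x ∂μ ≤ M := by
  have hFi (i : ι) : 0 ≤ᵐ[μ] F i := by filter_upwards [hF0] with x h using h i
  have hG0 : 0 ≤ᵐ[μ] G := by
    filter_upwards [hF0, hlim] with x h0 hx using ge_of_tendsto' hx h0
  obtain ⟨i₀⟩ := u.nonempty_of_neBot
  rw [integral_eq_lintegral_of_nonneg_ae hG0
    (aestronglyMeasurable_of_tendsto_ae u (fun i => (hF i).aestronglyMeasurable) hlim)]
  refine ENNReal.toReal_le_of_le_ofReal ((integral_nonneg_of_ae (hFi i₀)).trans (hM i₀)) ?_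
  calc ∫⁻ x, ENNReal.ofReal (G x) ∂μ
      = ∫⁻ x, liminf (fun i => ENNReal.ofReal (F i x)) u ∂μ := by
        refine lintegral_congr_ae ?_
        filter_upwards [hlim] with x hx
        exact ((ENNReal.continuous_ofReal.tendsto _).comp hx).liminf_eq.symm
    _ ≤ liminf (fun i => ∫⁻ x, ENNReal.ofReal (F i x) ∂μ) u :=
        lintegral_liminf_le' fun i => (hF i).aestronglyMeasurable.aemeasurable.ennreal_ofReal
    _ ≤ ENNReal.ofReal M := by
        refine liminf_le_of_frequently_le' (Frequently.of_forall fun i => ?_)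
        rw [← ofReal_integral_eq_lintegral_ofReal (hF i) (hFi i)]
        exact ENNReal.ofReal_le_ofReal (hM i)

theorem intervalIntegral_le_of_tendsto_of_forall_integral_le {ι : Type*} {u : Filter ι} [u.NeBot]
    [u.IsCountablyGenerated] {a b M : ℝ} {F : ι → ℝ → ℝ} {G : ℝ → ℝ} (hab : a ≤ b)
    (hF : ∀ i, ContinuousOn (F i) (Icc a b)) (hF0 : ∀ i x, 0 ≤ F i x)
    (hlim : ∀ x ∈ Ioo a b, Tendsto (fun i => F i x) u (nhds (G x)))
    (hM : ∀ i, ∫ x in a..b, F i x ≤ M) : ∫ x in a..b, G x ≤ M := by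
  simp only [intervalIntegral.integral_of_le hab, integral_Ioc_eq_integral_Ioo] at hM ⊢
  exact integral_le_of_tendsto_of_forall_integral_le
    (fun i => (hF i).integrableOn_Icc.mono_set Ioo_subset_Icc_self)
    (Eventually.of_forall fun x i => hF0 i x)
    ((ae_restrict_mem measurableSet_Ioo).mono hlim) hM

/-! ### Local boundedness by category -/

theorem bddAbove_image_of_isCompact {X : Type*} [TopologicalSpace X] {K : Set X} {N : X → ℝ}
    (hK : IsCompact K) (h : ∀ t ∈ K, IsBoundedUnder (· ≤ ·) (nhdsWithin t K) N) :
    BddAbove (N '' K) := by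
  refine hK.induction_on (p := fun S => BddAbove (N '' S)) (by simp)
    (fun S T hST hT => hT.mono (image_mono hST))
    (fun S T hS hT => by rw [image_union]; exact hS.union hT) fun t ht => ?_
  obtain ⟨c, hc⟩ := h t ht
  exact ⟨{s | N s ≤ c}, hc, c, by rintro _ ⟨s, hs, rfl⟩; exact hs⟩

theorem isOpen_setOf_isBoundedUnder_nhdsWithin {X : Type*} [TopologicalSpace X] (S : Set X)
    (N : X → ℝ) : IsOpen {t | IsBoundedUnder (· ≤ ·) (nhdsWithin t S) N} := by
  simp only [IsBoundedUnder, IsBounded, eventually_map, eventually_nhdsWithin_iff]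
  refine isOpen_iff_mem_nhds.2 fun t ⟨c, hc⟩ => ?_
  filter_upwards [eventually_eventually_nhds.2 hc] with s hs using ⟨c, hs⟩

theorem exists_isBoundedUnder_nhdsWithin_of_isClosed {X : Type*} [MetricSpace X] [CompleteSpace X]
    {Z : Set X} {N : X → ℝ} (hZ : IsClosed Z) (hne : Z.Nonempty)
    (hN : ∀ n : ℕ, IsClosed {t ∈ Z | N t ≤ n}) :
    ∃ t ∈ Z, IsBoundedUnder (· ≤ ·) (nhdsWithin t Z) N := by
  have := hne.to_subtype
  have := hZ.completeSpace_coe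
  obtain ⟨n, t, ht⟩ := nonempty_interior_of_iUnion_of_closed
    (f := fun n : ℕ => {t : Z | N t ≤ n})
    (fun n => by simpa using (hN n).preimage (continuous_subtype_val (p := (· ∈ Z))))
    (eq_univ_of_forall fun t => mem_iUnion.2 (exists_nat_ge (N t)))
  refine ⟨t, t.2, n, ?_⟩
  rw [nhdsWithin_eq_map_subtype_coe t.2]
  exact mem_interior_iff_mem_nhds.1 ht

section Propagation

variable {N : ℝ → ℝ} {p q K : ℝ}

/-- Propagate from the last point of `[τ, s]` at which `N` is unbounded nearby, or from `τ`. -/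
theorem le_mul_of_forall_mem_insert_le {τ s m : ℝ} (hK : 1 ≤ K) (hN : 0 ≤ N τ)
    (hprop : ∀ a t, p ≤ a → a < t → t ≤ q → (∀ t₁ ∈ Ioo a t, BddAbove (N '' Icc t₁ t)) →
      N t ≤ K * N a) (hpτ : p ≤ τ) (hτs : τ ≤ s) (hsq : s ≤ q)
    (hm : ∀ r ∈ insert τ ({t | ¬ IsBoundedUnder (· ≤ ·) (nhdsWithin t (Icc p q)) N} ∩ Icc τ s),
      N r ≤ m) : N s ≤ K * m := by
  set Z := {t | ¬ IsBoundedUnder (· ≤ ·) (nhdsWithin t (Icc p q)) N}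
  have hZ : IsClosed Z := (isOpen_setOf_isBoundedUnder_nhdsWithin _ N).isClosed_compl
  obtain ⟨a, ha, hlast⟩ := ((isCompact_Icc (a := τ) (b := s)).inter_left hZ).insert τ
    |>.exists_isGreatest ⟨τ, mem_insert _ _⟩
  have ham : N a ≤ m := hm a ha
  have hm0 : 0 ≤ m := hN.trans (hm τ (mem_insert _ _))
  obtain ⟨hτa, has⟩ : τ ≤ a ∧ a ≤ s := by
    rcases ha with rfl | ⟨-, ha⟩
    exacts [⟨le_rfl, hτs⟩, ha]
  rcases has.eq_or_lt with rfl | has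
  · nlinarith
  refine (hprop a s (hpτ.trans hτa) has hsq fun t₁ ht₁ => ?_).trans (by gcongr)
  refine bddAbove_image_of_isCompact isCompact_Icc fun r hr => ?_
  have har : a < r := ht₁.1.trans_le hr.1
  have hrZ : r ∉ Z := fun h => har.not_ge (hlast (.inr ⟨h, hτa.trans har.le, hr.2⟩))
  exact IsBoundedUnder.mono
    (nhdsWithin_mono _ (Icc_subset_Icc ((hpτ.trans hτa).trans ht₁.1.le) hsq)) (not_not.1 hrZ)

/-- A function that obeys `N t ≤ K * N a` for `a < t` as soon as it is bounded near `(a, t]` is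
bounded: by the Baire property, `N` is bounded along the closed set of times near which it is
unbounded, somewhere in that set, and this bound then propagates to all neighbouring times. -/
theorem bddAbove_image_Icc_of_propagation (hK : 1 ≤ K) (hN : ∀ t ∈ Icc p q, 0 ≤ N t)
    (hcl : ∀ c, IsClosed {t ∈ Icc p q | N t ≤ c})
    (hprop : ∀ a t, p ≤ a → a < t → t ≤ q → (∀ t₁ ∈ Ioo a t, BddAbove (N '' Icc t₁ t)) →
      N t ≤ K * N a) : BddAbove (N '' Icc p q) := by
  refine bddAbove_image_of_isCompact isCompact_Icc ?_
  by_contra! hunbdd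
  set Z := {t | ¬ IsBoundedUnder (· ≤ ·) (nhdsWithin t (Icc p q)) N}
  have hZ : IsClosed Z := (isOpen_setOf_isBoundedUnder_nhdsWithin _ N).isClosed_compl
  have hZpq : Z ⊆ Icc p q := fun t ht => by
    by_contra htpq
    refine ht ⟨0, ?_⟩
    rw [notMem_closure_iff_nhdsWithin_eq_bot.1 (by rwa [closure_Icc])]
    simp
  obtain ⟨t₀, ht₀Z, n, hn⟩ := exists_isBoundedUnder_nhdsWithin_of_isClosed (N := N) hZ
    (hunbdd.imp fun t ht => ht.2) fun n => by
      convert hZ.inter (hcl n) using 1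
      ext t
      exact ⟨fun h => ⟨h.1, hZpq h.1, h.2⟩, fun h => ⟨h.1, h.2.2⟩⟩
  obtain ⟨ε, hε, hball⟩ := Metric.mem_nhdsWithin_iff.1 hn
  have ht₀ := hZpq ht₀Z
  set τ := max p (t₀ - ε / 2)
  have hτ : τ ∈ Icc p q := ⟨le_max_left _ _, max_le (ht₀.1.trans ht₀.2) (by linarith [ht₀.2])⟩
  refine ht₀Z ⟨K * max n (N τ), ?_⟩
  rw [eventually_map, eventually_nhdsWithin_iff]
  filter_upwards [Ioo_mem_nhds (show t₀ - ε / 2 < t₀ by linarith)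
    (show t₀ < t₀ + ε / 2 by linarith)] with s hs hspq
  refine le_mul_of_forall_mem_insert_le hK (hN τ hτ) hprop hτ.1 (max_le hspq.1 hs.1.le) hspq.2 ?_
  rintro r (rfl | ⟨hrZ, hr⟩)
  · exact le_max_right _ _
  · refine le_max_of_le_left (hball ⟨?_, hrZ⟩)
    rw [Metric.mem_ball, Real.dist_eq, abs_lt]
    constructor <;> linarith [(le_max_right p (t₀ - ε / 2)).trans hr.1, hr.2, hs.2]

end Propagation

/-! ### Classical solutions -/

/-- The time derivative `-(f' + f f' + f''')` of a solution of the KdV system on `[0, L]` which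
passes through `f`, with one-sided derivatives at the endpoints. -/
noncomputable def kdvVelocity (L : ℝ) (f : ℝ → ℝ) : ℝ → ℝ :=
  kdvField f (iteratedDerivWithin 1 f (Icc 0 L)) (iteratedDerivWithin 3 f (Icc 0 L))

/-- The square of the `L²(0, L)` norm of the velocity of a solution through `f`. -/
noncomputable def velocitySq (L : ℝ) (f : ℝ → ℝ) : ℝ :=
  ∫ x in (0 : ℝ)..L, kdvVelocity L f x ^ 2

theorem velocitySq_nonneg {L : ℝ} (hL : 0 ≤ L) (f : ℝ → ℝ) : 0 ≤ velocitySq L f :=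
  intervalIntegral.integral_nonneg hL fun _ _ => sq_nonneg _

theorem hasDerivAt_iteratedDerivWithin_Icc {a b x : ℝ} {f : ℝ → ℝ} {n k : ℕ} (hab : a < b)
    (hf : ContDiffOn ℝ n f (Icc a b)) (hk : k < n) (hx : x ∈ Ioo a b) :
    HasDerivAt (iteratedDerivWithin k f (Icc a b))
      (iteratedDerivWithin (k + 1) f (Icc a b) x) x := by
  rw [iteratedDerivWithin_succ]
  exact (hf.differentiableOn_iteratedDerivWithin (by exact_mod_cast hk) (uniqueDiffOn_Icc hab) x
    (Ioo_subset_Icc_self hx)).hasDerivWithinAt.hasDerivAt (Icc_mem_nhds hx.1 hx.2)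

theorem integral_sq_deriv_le_of_integral_sq_sub_le {L a t M : ℝ} {y : ℝ → ℝ → ℝ} {v : ℝ → ℝ}
    (hL : 0 ≤ L) (hat : a < t) (hy : ∀ s ∈ Ioc a t, ContinuousOn (y s) (Icc 0 L))
    (hd : ∀ x ∈ Ioo 0 L, HasDerivAt (fun s => y s x) (v x) t)
    (hM : ∀ s ∈ Ioo a t, ∫ x in (0 : ℝ)..L, (y t x - y s x) ^ 2 ≤ M * (t - s) ^ 2) :
    ∫ x in (0 : ℝ)..L, v x ^ 2 ≤ M := by
  obtain ⟨s, -, hs, hst⟩ := exists_seq_strictMono_tendsto' hat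
  have hs_ne : Tendsto s atTop (nhdsWithin t {t}ᶜ) :=
    tendsto_nhdsWithin_iff.2 ⟨hst, Eventually.of_forall fun n => (hs n).2.ne⟩
  have ht := hy t (right_mem_Ioc.2 hat)
  refine intervalIntegral_le_of_tendsto_of_forall_integral_le
    (F := fun n x => ((t - s n)⁻¹ * (y t x - y (s n) x)) ^ 2) (u := atTop) hL (fun n => ?_)
    (fun _ _ => sq_nonneg _) (fun x hx => ?_) fun n => ?_
  · exact ((ht.sub (hy (s n) (Ioo_subset_Ioc_self (hs n)))).const_mul _).pow 2
  · have hslope := ((hasDerivAt_iff_tendsto_slope.1 (hd x hx)).comp hs_ne).pow 2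
    simpa only [Function.comp_apply, slope_comm _ t, slope_def_field, div_eq_inv_mul] using hslope
  · have hpos : 0 < (t - s n) ^ 2 := pow_pos (sub_pos.2 (hs n).2) 2
    simp only [mul_pow, inv_pow]
    rw [intervalIntegral.integral_const_mul, inv_mul_le_iff₀ hpos, mul_comm]
    exact hM (s n) (hs n)

namespace IsNonlinearKdVSolIci

variable {L Y a b t p q x : ℝ} {y : ℝ → ℝ → ℝ}

theorem isProfile (hL : 0 < L) (h : IsNonlinearKdVSolIci L y) (ht : 0 ≤ t) :
    IsProfile L (y t) (iteratedDerivWithin 1 (y t) (Icc 0 L))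
      (iteratedDerivWithin 2 (y t) (Icc 0 L)) (iteratedDerivWithin 3 (y t) (Icc 0 L)) := by
  obtain ⟨hspace, -, -, -, hbc⟩ := h
  have hf : ContDiffOn ℝ (3 : ℕ) (y t) (Icc 0 L) := hspace t ht
  obtain ⟨left, right, right_deriv⟩ := hbc t ht
  have hcont (k : ℕ) (hk : k ≤ 3) :
      ContinuousOn (iteratedDerivWithin k (y t) (Icc 0 L)) (Icc 0 L) :=
    hf.continuousOn_iteratedDerivWithin (by exact_mod_cast hk) (uniqueDiffOn_Icc hL)
  have hderiv (k : ℕ) (hk : k < 3) (x : ℝ) (hx : x ∈ Ioo 0 L) :=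
    hasDerivAt_iteratedDerivWithin_Icc hL hf hk hx
  exact
    { cont := hf.continuousOn
      cont₁ := hcont 1 (by norm_num)
      cont₂ := hcont 2 (by norm_num)
      cont₃ := hcont 3 (by norm_num)
      hasDerivAt := by simpa only [iteratedDerivWithin_zero] using hderiv 0 (by norm_num)
      hasDerivAt₁ := hderiv 1 (by norm_num)
      hasDerivAt₂ := hderiv 2 (by norm_num)
      left := left
      right := right
      right_deriv := by rwa [iteratedDerivWithin_one] }

theorem continuousOn_uncurry (h : IsNonlinearKdVSolIci L y) (hp : 0 ≤ p) :
    ContinuousOn (Function.uncurry y) (Icc p q ×ˢ Icc 0 L) :=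
  h.2.2.1.mono (prod_mono_left fun _ ht => hp.trans ht.1)

theorem derivWithin_time_eq (h : IsNonlinearKdVSolIci L y) (ht : 0 < t) (hx : x ∈ Ioo 0 L) :
    derivWithin (fun s => y s x) (Ici 0) t = kdvVelocity L (y t) x := by
  rw [kdvVelocity, kdvField, iteratedDerivWithin_one]
  linarith [h.2.2.2.1 t ht x hx]

theorem hasDerivAt_time (h : IsNonlinearKdVSolIci L y) (ht : 0 < t) (hx : x ∈ Ioo 0 L) :
    HasDerivAt (fun s => y s x) (kdvVelocity L (y t) x) t := by
  rw [← h.derivWithin_time_eq ht hx]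
  exact ((h.2.1 x (Ioo_subset_Icc_self hx)).differentiableOn one_ne_zero t
    ht.le).hasDerivWithinAt.hasDerivAt (Ici_mem_nhds ht)

theorem continuousOn_kdvVelocity_time (h : IsNonlinearKdVSolIci L y) (hx : x ∈ Ioo 0 L) :
    ContinuousOn (fun t => kdvVelocity L (y t) x) (Ioi 0) :=
  (((h.2.1 x (Ioo_subset_Icc_self hx)).continuousOn_derivWithin (uniqueDiffOn_Ici 0) le_rfl).mono
    Ioi_subset_Ici_self).congr fun _ ht => (h.derivWithin_time_eq ht hx).symm

theorem continuousOn_kdvVelocity (hL : 0 < L) (h : IsNonlinearKdVSolIci L y) (ht : 0 ≤ t) :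
    ContinuousOn (kdvVelocity L (y t)) (Icc 0 L) :=
  (h.isProfile hL ht).continuousOn_kdvField

theorem hasTimeDerivOn_of_bddAbove (hL : 0 < L) (h : IsNonlinearKdVSolIci L y) (hp : 0 < p)
    (hb : BddAbove ((fun t => velocitySq L (y t)) '' Icc p q)) :
    HasTimeDerivOn L p q y (fun t => kdvVelocity L (y t)) where
  continuousOn := h.continuousOn_uncurry hp.le
  continuousOn_space t ht := h.continuousOn_kdvVelocity hL (hp.le.trans ht.1)
  continuousOn_time x hx := (h.continuousOn_kdvVelocity_time hx).mono fun t ht => hp.trans_le ht.1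
  hasDerivAt t ht x hx := h.hasDerivAt_time (hp.trans ht.1) hx
  exists_bound := by
    obtain ⟨C, hC⟩ := hb
    refine ⟨L + C, fun t ht => ?_⟩
    have hv := h.continuousOn_kdvVelocity hL (hp.le.trans ht.1)
    calc ∫ x in (0 : ℝ)..L, |kdvVelocity L (y t) x|
        ≤ ∫ x in (0 : ℝ)..L, (1 + kdvVelocity L (y t) x ^ 2) :=
          integral_mono_of_continuousOn hL.le (by fun_prop) (by fun_prop) fun x _ => by
            rw [← sq_abs]
            nlinarith [sq_nonneg (|kdvVelocity L (y t) x| - 1)]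
      _ = L + velocitySq L (y t) := by
          rw [integral_add_of_continuousOn hL.le (by fun_prop) (by fun_prop)]
          simp [velocitySq]
      _ ≤ L + C := by gcongr; exact hC ⟨t, ht, rfl⟩

theorem integral_weighted_sub_initial_le (hL : 0 < L) (h : IsNonlinearKdVSolIci L y) (ha : 0 < a)
    (hab : a < b) (hY : ∀ t ∈ Icc a b, ∀ x ∈ Icc 0 L, |y t x| ≤ Y)
    (hb : ∀ a' ∈ Ioo a b, BddAbove ((fun t => velocitySq L (y t)) '' Icc a' b)) :
    ∫ x in (0 : ℝ)..L, (1 + x) * (y b x - y a x) ^ 2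
      ≤ (1 + L) * exp (kdvGrowthRate L Y * (b - a) + 1) * velocitySq L (y a) * (b - a) ^ 2 := by
  have ha_mem : a ∈ Icc a b := left_mem_Icc.2 hab.le
  have hY0 : 0 ≤ Y := (abs_nonneg _).trans (hY a ha_mem 0 (left_mem_Icc.2 hL.le))
  have hba : 0 < b - a := sub_pos.2 hab
  have hcont := h.continuousOn_uncurry (q := b) ha.le
  have hya := (h.isProfile hL ha.le).cont
  have hgron := weighted_gronwall (u := fun t x => y t x - y a x)
    (v := fun t => kdvVelocity L (y t)) (ρ := fun x => 1 + x)
    (K := kdvGrowthRate L Y + (b - a)⁻¹) (c := (1 + L) * (b - a) * velocitySq L (y a)) hL.le hab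
    (by unfold kdvGrowthRate; positivity)
    (mul_nonneg (by positivity) (velocitySq_nonneg hL.le _)) (by fun_prop)
    (hcont.sub (hya.comp continuousOn_snd fun p hp => hp.2))
    (fun a' ha' => ((h.hasTimeDerivOn_of_bddAbove hL (ha.trans ha'.1) (hb a' ha')).sub hL.le
      (HasTimeDerivOn.const hya)).congr_deriv fun t x => sub_zero _)
    fun t ht => IsProfile.integral_weighted_sub_mul_kdvField_le hL.le hba
      (h.isProfile hL (ha.trans ht.1).le) (h.isProfile hL ha.le) (hY t (Ioc_subset_Icc_self ht))
      (hY a ha_mem)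
  have hexp : (kdvGrowthRate L Y + (b - a)⁻¹) * (b - a) = kdvGrowthRate L Y * (b - a) + 1 := by
    field_simp
  simp only [hexp, sub_self, ne_eq, OfNat.ofNat_ne_zero, not_false_eq_true, zero_pow, mul_zero,
    intervalIntegral.integral_zero, zero_add] at hgron
  linarith

theorem integral_weighted_sub_shift_le {s : ℝ} (hL : 0 < L) (h : IsNonlinearKdVSolIci L y)
    (ha : 0 < a) (hab : a < b) (hs : 0 ≤ s)
    (hY : ∀ t ∈ Icc a (b + s), ∀ x ∈ Icc 0 L, |y t x| ≤ Y)
    (hb : ∀ a' ∈ Ioo a (b + s), BddAbove ((fun t => velocitySq L (y t)) '' Icc a' (b + s))) :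
    ∫ x in (0 : ℝ)..L, (1 + x) * (y (b + s) x - y b x) ^ 2
      ≤ exp (kdvGrowthRate L Y * (b - a))
        * ∫ x in (0 : ℝ)..L, (1 + x) * (y (a + s) x - y a x) ^ 2 := by
  have hY0 : 0 ≤ Y :=
    (abs_nonneg _).trans (hY a (left_mem_Icc.2 (by linarith)) 0 (left_mem_Icc.2 hL.le))
  have hcont := h.continuousOn_uncurry (q := b + s) ha.le
  have hderiv (a' : ℝ) (ha' : a' ∈ Ioo a b) :
      HasTimeDerivOn L a' (b + s) y (fun t => kdvVelocity L (y t)) :=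
    h.hasTimeDerivOn_of_bddAbove hL (ha.trans ha'.1)
      (hb a' ⟨ha'.1, ha'.2.trans_le (by linarith)⟩)
  have hgron := weighted_gronwall (u := fun t x => y (t + s) x - y t x)
    (v := fun t x => kdvVelocity L (y (t + s)) x - kdvVelocity L (y t) x) (ρ := fun x => 1 + x)
    (K := kdvGrowthRate L Y) (c := 0) hL.le hab (by unfold kdvGrowthRate; positivity) le_rfl
    (by fun_prop)
    ((hcont.comp (f := fun p : ℝ × ℝ => (p.1 + s, p.2)) (by fun_prop) fun p hp =>
      ⟨⟨by linarith [hp.1.1], by linarith [hp.1.2]⟩, hp.2⟩).sub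
      (hcont.mono (prod_mono_left (Icc_subset_Icc_right (by linarith)))))
    (fun a' ha' => (((hderiv a' ha').mono (by linarith) le_rfl).comp_add_const).sub hL.le
      ((hderiv a' ha').mono le_rfl (by linarith)))
    fun t ht => ?_
  · simpa using hgron
  · have hprof (r : ℝ) (hr : a ≤ r) := h.isProfile hL (ha.le.trans hr)
    simpa only [add_zero, kdvVelocity] using IsProfile.integral_weighted_kdvField_sub_le hL.le
      (hprof (t + s) (by linarith [ht.1])) (hprof t ht.1.le)
      (hY (t + s) ⟨by linarith [ht.1], by linarith [ht.2]⟩)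
      (hY t ⟨ht.1.le, by linarith [ht.2]⟩)

theorem integral_sq_sub_le {s : ℝ} (hL : 0 < L) (h : IsNonlinearKdVSolIci L y) (ha : 0 < a)
    (hs : s ∈ Ioo a t) (hY : ∀ r ∈ Icc a t, ∀ x ∈ Icc 0 L, |y r x| ≤ Y)
    (hb : ∀ a' ∈ Ioo a t, BddAbove ((fun r => velocitySq L (y r)) '' Icc a' t)) :
    ∫ x in (0 : ℝ)..L, (y t x - y s x) ^ 2
      ≤ (1 + L) * exp (kdvGrowthRate L Y * (t - a) + 1) * velocitySq L (y a) * (t - s) ^ 2 := by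
  obtain ⟨e, rfl⟩ : ∃ e, t = s + e := ⟨t - s, (add_sub_cancel s t).symm⟩
  have he0 : 0 < e := pos_of_lt_add_right hs.2
  have hae : a + e ≤ s + e := by linarith [hs.1]
  have hinit := h.integral_weighted_sub_initial_le hL ha (lt_add_of_pos_right a he0)
    (fun r hr => hY r (Icc_subset_Icc_right hae hr)) fun a' ha' =>
      (hb a' (Ioo_subset_Ioo_right hae ha')).mono (image_mono (Icc_subset_Icc_right hae))
  have hshift := h.integral_weighted_sub_shift_le hL ha hs.1 he0.le hY hb
  have hct := (h.isProfile hL ((ha.trans hs.1).trans hs.2).le).cont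
  have hcs := (h.isProfile hL (ha.trans hs.1).le).cont
  have hexp : exp (kdvGrowthRate L Y * (s + e - a) + 1)
      = exp (kdvGrowthRate L Y * (s - a)) * exp (kdvGrowthRate L Y * e + 1) := by
    rw [← exp_add]; ring_nf
  rw [add_sub_cancel_left] at hinit ⊢
  calc ∫ x in (0 : ℝ)..L, (y (s + e) x - y s x) ^ 2
      ≤ ∫ x in (0 : ℝ)..L, (1 + x) * (y (s + e) x - y s x) ^ 2 :=
        integral_mono_of_continuousOn hL.le (by fun_prop) (by fun_prop)
          fun x hx => le_mul_of_one_le_left (sq_nonneg _) (by linarith [hx.1])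
    _ ≤ exp (kdvGrowthRate L Y * (s - a)) * ((1 + L) * exp (kdvGrowthRate L Y * e + 1)
          * velocitySq L (y a) * e ^ 2) := hshift.trans (by gcongr)
    _ = _ := by rw [hexp]; ring

theorem velocitySq_le (hL : 0 < L) (h : IsNonlinearKdVSolIci L y) (ha : 0 < a) (hat : a < t)
    (hY : ∀ r ∈ Icc a t, ∀ x ∈ Icc 0 L, |y r x| ≤ Y)
    (hb : ∀ a' ∈ Ioo a t, BddAbove ((fun r => velocitySq L (y r)) '' Icc a' t)) :
    velocitySq L (y t)
      ≤ (1 + L) * exp (kdvGrowthRate L Y * (t - a) + 1) * velocitySq L (y a) :=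
  integral_sq_deriv_le_of_integral_sq_sub_le hL.le hat
    (fun _ hs => (h.isProfile hL (ha.trans hs.1).le).cont)
    (fun _ hx => h.hasDerivAt_time (ha.trans hat) hx)
    fun _ hs => h.integral_sq_sub_le hL ha hs hY hb

theorem isClosed_setOf_velocitySq_le (hL : 0 < L) (h : IsNonlinearKdVSolIci L y) (hp : 0 < p)
    (c : ℝ) : IsClosed {t ∈ Icc p q | velocitySq L (y t) ≤ c} := by
  refine IsSeqClosed.isClosed fun τ t hτ hτt => ?_
  have ht : t ∈ Icc p q := isClosed_Icc.mem_of_tendsto hτt (Eventually.of_forall fun n => (hτ n).1)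
  refine ⟨ht, intervalIntegral_le_of_tendsto_of_forall_integral_le
    (F := fun n x => kdvVelocity L (y (τ n)) x ^ 2) (u := atTop) hL.le
    (fun n => (h.continuousOn_kdvVelocity hL (hp.le.trans (hτ n).1.1)).pow 2)
    (fun _ _ => sq_nonneg _) (fun x hx => ?_) fun n => (hτ n).2⟩
  exact (((h.continuousOn_kdvVelocity_time hx).continuousAt
    (Ioi_mem_nhds (hp.trans_le ht.1))).tendsto.comp hτt).pow 2

theorem bddAbove_velocitySq (hL : 0 < L) (h : IsNonlinearKdVSolIci L y) (hp : 0 < p) :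
    BddAbove ((fun t => velocitySq L (y t)) '' Icc p q) := by
  rcases lt_or_ge q p with hqp | hpq
  · simp [Icc_eq_empty_of_lt hqp]
  obtain ⟨Y, hY0, hY⟩ :=
    exists_abs_le_of_continuousOn_uncurry (h.continuousOn_uncurry (q := q) hp.le)
  have hK : 0 ≤ kdvGrowthRate L Y := by unfold kdvGrowthRate; positivity
  have hexp : 1 ≤ exp (kdvGrowthRate L Y * (q - p) + 1) :=
    one_le_exp (add_nonneg (mul_nonneg hK (sub_nonneg.2 hpq)) zero_le_one)
  refine bddAbove_image_Icc_of_propagation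
    (K := (1 + L) * exp (kdvGrowthRate L Y * (q - p) + 1))
    (one_le_mul_of_one_le_of_one_le (by linarith) hexp) (fun t _ => velocitySq_nonneg hL.le _)
    (h.isClosed_setOf_velocitySq_le hL hp) fun a t hpa hat htq hb => ?_
  refine (h.velocitySq_le hL (hp.trans_le hpa) hat
    (fun r hr => hY r ⟨hpa.trans hr.1, hr.2.trans htq⟩) hb).trans ?_
  gcongr
  exact velocitySq_nonneg hL.le _

theorem hasTimeDerivOn (hL : 0 < L) (h : IsNonlinearKdVSolIci L y) (hp : 0 < p) :
    HasTimeDerivOn L p q y (fun t => kdvVelocity L (y t)) :=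
  h.hasTimeDerivOn_of_bddAbove hL hp (h.bddAbove_velocitySq hL hp)

theorem antitoneOn_integral_sq (hL : 0 < L) (h : IsNonlinearKdVSolIci L y) :
    AntitoneOn (fun t => ∫ x in (0 : ℝ)..L, y t x ^ 2) (Ici 0) := by
  intro a ha b _ hab
  rcases hab.eq_or_lt with rfl | hab
  · exact le_rfl
  have hgron := weighted_gronwall (ρ := fun _ => 1) (K := 0) (c := 0) hL.le hab le_rfl le_rfl
    continuousOn_const (h.continuousOn_uncurry ha)
    (fun a' ha' => h.hasTimeDerivOn hL (ha.trans_lt ha'.1)) fun t ht => ?_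
  · simpa using hgron
  · have := (h.isProfile hL (ha.trans ht.1.le)).integral_two_mul_kdvField hL.le
    simp only [mul_one, zero_mul, add_zero, kdvVelocity, this]
    exact neg_nonpos.2 (sq_nonneg _)

end IsNonlinearKdVSolIci

/-! ### Poincaré inequalities -/

theorem sq_integral_mul_le {a b : ℝ} {f g : ℝ → ℝ} (hab : a ≤ b) (hf : ContinuousOn f (Icc a b))
    (hg : ContinuousOn g (Icc a b)) :
    (∫ x in a..b, f x * g x) ^ 2 ≤ (∫ x in a..b, f x ^ 2) * ∫ x in a..b, g x ^ 2 := by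
  have hquad (s : ℝ) : 0 ≤ (∫ x in a..b, f x ^ 2) * (s * s) + 2 * (∫ x in a..b, f x * g x) * s
      + ∫ x in a..b, g x ^ 2 := by
    calc 0 ≤ ∫ x in a..b, (s * f x + g x) ^ 2 :=
          intervalIntegral.integral_nonneg hab fun x _ => sq_nonneg _
      _ = ∫ x in a..b, (s * s * f x ^ 2 + 2 * s * (f x * g x) + g x ^ 2) := by ring_nf
      _ = _ := by
        rw [integral_add_of_continuousOn hab (by fun_prop) (by fun_prop),
          integral_add_of_continuousOn hab (by fun_prop) (by fun_prop),
          intervalIntegral.integral_const_mul, intervalIntegral.integral_const_mul]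
        ring
  have := discrim_le_zero hquad
  rw [discrim] at this
  linarith

theorem sq_integral_abs_le {a b : ℝ} {f : ℝ → ℝ} (hab : a ≤ b) (hf : ContinuousOn f (Icc a b)) :
    (∫ x in a..b, |f x|) ^ 2 ≤ (b - a) * ∫ x in a..b, f x ^ 2 := by
  simpa using sq_integral_mul_le (f := fun _ => 1) hab continuousOn_const hf.abs

theorem sq_le_mul_integral_sq_deriv {a b x : ℝ} {f f' : ℝ → ℝ} (hf : ContinuousOn f (Icc a b))
    (hf' : ContinuousOn f' (Icc a b)) (hd : ∀ x ∈ Ioo a b, HasDerivAt f (f' x) x) (ha : f a = 0)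
    (hx : x ∈ Icc a b) : f x ^ 2 ≤ (b - a) * ∫ x in a..b, f' x ^ 2 := by
  have hab := hx.1.trans hx.2
  have hsub : Icc a x ⊆ Icc a b := Icc_subset_Icc_right hx.2
  have hftc : ∫ t in a..x, f' t = f x := by
    rw [intervalIntegral.integral_eq_sub_of_hasDerivAt_of_le hx.1 (hf.mono hsub)
      (fun t ht => hd t (Ioo_subset_Ioo_right hx.2 ht))
      ((hf'.mono hsub).intervalIntegrable_of_Icc hx.1), ha, sub_zero]
  have habs : |f x| ≤ ∫ t in a..b, |f' t| := by
    rw [← hftc]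
    exact (intervalIntegral.abs_integral_le_integral_abs hx.1).trans
      (intervalIntegral.integral_mono_interval le_rfl hx.1 hx.2
        (Eventually.of_forall fun _ => abs_nonneg _) (hf'.abs.intervalIntegrable_of_Icc hab))
  calc f x ^ 2 = |f x| ^ 2 := (sq_abs _).symm
    _ ≤ (∫ t in a..b, |f' t|) ^ 2 := by gcongr
    _ ≤ _ := sq_integral_abs_le hab hf'

theorem norm_sq_fourierCoeffOn_le {a b : ℝ} {f f' : ℝ → ℂ} {n : ℤ} (hab : a < b) (hn : n ≠ 0)
    (hf : ContinuousOn f (Icc a b)) (hf' : ContinuousOn f' (Icc a b))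
    (hd : ∀ x ∈ Ioo a b, HasDerivAt f (f' x) x) (hper : f a = f b) :
    ‖fourierCoeffOn hab f n‖ ^ 2 ≤ ((b - a) / (2 * π)) ^ 2 * ‖fourierCoeffOn hab f' n‖ ^ 2 := by
  have hn1 : (1 : ℝ) ≤ |(n : ℝ)| := by exact_mod_cast Int.one_le_abs hn
  rw [fourierCoeffOn_of_hasDerivAt_Ioo hab hn (by rwa [uIcc_of_le hab.le])
    (by rwa [min_eq_left hab.le, max_eq_right hab.le]) (hf'.intervalIntegrable_of_Icc hab.le),
    hper, sub_self, mul_zero, zero_sub, ← mul_pow]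
  have hba : ‖(b : ℂ) - a‖ = b - a := by
    rw [← Complex.ofReal_sub, Complex.norm_of_nonneg (sub_nonneg.2 hab.le)]
  simp only [norm_mul, norm_neg, norm_div, norm_one, Complex.norm_I, Complex.norm_intCast,
    Complex.norm_real, Complex.norm_ofNat, mul_one, hba, norm_of_nonneg pi_pos.le]
  have := sub_pos.2 hab
  refine pow_le_pow_left₀ (by positivity) ?_ 2
  calc 1 / (2 * π * |(n : ℝ)|) * ((b - a) * ‖fourierCoeffOn hab f' n‖)
      ≤ 1 / (2 * π * 1) * ((b - a) * ‖fourierCoeffOn hab f' n‖) := by gcongr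
    _ = (b - a) / (2 * π) * ‖fourierCoeffOn hab f' n‖ := by ring

/-- Wirtinger's inequality, with the mean value of `f` on the right-hand side: compare the Fourier
coefficients of `f` and `f'` in Parseval's identity. -/
theorem integral_norm_sq_le_of_periodic {a b : ℝ} {f f' : ℝ → ℂ} (hab : a < b)
    (hf : ContinuousOn f (Icc a b)) (hf' : ContinuousOn f' (Icc a b))
    (hd : ∀ x ∈ Ioo a b, HasDerivAt f (f' x) x) (hper : f a = f b) :
    ∫ x in a..b, ‖f x‖ ^ 2 ≤ (b - a)⁻¹ * ‖∫ x in a..b, f x‖ ^ 2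
      + ((b - a) / (2 * π)) ^ 2 * ∫ x in a..b, ‖f' x‖ ^ 2 := by
  have hba := sub_pos.2 hab
  have parseval {g : ℝ → ℂ} (hg : ContinuousOn g (Icc a b)) :
      HasSum (fun n => ‖fourierCoeffOn hab g n‖ ^ 2) ((b - a)⁻¹ • ∫ x in a..b, ‖g x‖ ^ 2) := by
    obtain ⟨C, hC⟩ := isCompact_Icc.exists_bound_of_continuousOn hg
    refine hasSum_sq_fourierCoeffOn hab (MemLp.of_bound
      ((hg.mono Ioc_subset_Icc_self).aestronglyMeasurable measurableSet_Ioc) C ?_)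
    exact ae_restrict_of_forall_mem measurableSet_Ioc fun x hx => hC x (Ioc_subset_Icc_self hx)
  have hcoeff (n : ℤ) : ‖fourierCoeffOn hab f n‖ ^ 2
      ≤ (if n = 0 then ‖fourierCoeffOn hab f 0‖ ^ 2 else 0)
        + ((b - a) / (2 * π)) ^ 2 * ‖fourierCoeffOn hab f' n‖ ^ 2 := by
    split_ifs with hn
    · subst hn
      exact le_add_of_nonneg_right (by positivity)
    · rw [zero_add]
      exact norm_sq_fourierCoeffOn_le hab hn hf hf' hd hper
  have hmean : ‖fourierCoeffOn hab f 0‖ ^ 2 = (b - a)⁻¹ ^ 2 * ‖∫ x in a..b, f x‖ ^ 2 := by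
    rw [fourierCoeffOn_eq_integral, norm_smul, mul_pow, one_div, norm_eq_abs, sq_abs]
    simp only [neg_zero, fourier_zero, one_smul]
  have hsum := hasSum_le hcoeff (parseval hf)
    ((hasSum_ite_eq 0 _).add ((parseval hf').mul_left (((b - a) / (2 * π)) ^ 2)))
  rw [hmean, smul_eq_mul, smul_eq_mul, inv_mul_le_iff₀ hba] at hsum
  calc ∫ x in a..b, ‖f x‖ ^ 2 ≤ _ := hsum
    _ = _ := by field_simp

theorem integral_sq_le_of_periodic {a b : ℝ} {f f' : ℝ → ℝ} (hab : a < b)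
    (hf : ContinuousOn f (Icc a b)) (hf' : ContinuousOn f' (Icc a b))
    (hd : ∀ x ∈ Ioo a b, HasDerivAt f (f' x) x) (hper : f a = f b) :
    ∫ x in a..b, f x ^ 2 ≤ (b - a)⁻¹ * (∫ x in a..b, f x) ^ 2
      + ((b - a) / (2 * π)) ^ 2 * ∫ x in a..b, f' x ^ 2 := by
  have hcomplex := integral_norm_sq_le_of_periodic (f := fun x => (f x : ℂ))
    (f' := fun x => (f' x : ℂ)) hab (by fun_prop) (by fun_prop) (fun x hx => (hd x hx).ofReal_comp)
    (by rw [hper])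
  simpa only [Complex.norm_real, norm_eq_abs, sq_abs, intervalIntegral.integral_ofReal]
    using hcomplex

/-- Orthogonality to `1 - cos` identifies the mean value of `f` with `-∫ f' sin`. -/
theorem integral_sq_le_of_integral_mul_one_sub_cos_eq_zero {f f' : ℝ → ℝ}
    (hf : ContinuousOn f (Icc 0 (2 * π))) (hf' : ContinuousOn f' (Icc 0 (2 * π)))
    (hd : ∀ x ∈ Ioo 0 (2 * π), HasDerivAt f (f' x) x) (hper : f 0 = f (2 * π))
    (horth : ∫ x in (0 : ℝ)..(2 * π), f x * (1 - cos x) = 0) :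
    ∫ x in (0 : ℝ)..(2 * π), f x ^ 2 ≤ 3 / 2 * ∫ x in (0 : ℝ)..(2 * π), f' x ^ 2 := by
  have hπ : 0 ≤ 2 * π := two_pi_pos.le
  have hmean : ∫ x in (0 : ℝ)..(2 * π), f x * cos x = ∫ x in (0 : ℝ)..(2 * π), f x := by
    simp only [mul_sub, mul_one] at horth
    rw [integral_sub_of_continuousOn hπ (by fun_prop) (by fun_prop)] at horth
    linarith
  have hparts : ∫ x in (0 : ℝ)..(2 * π), f' x * sin x = -∫ x in (0 : ℝ)..(2 * π), f x := by
    rw [← hmean, eq_neg_iff_add_eq_zero,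
      ← integral_add_of_continuousOn hπ (by fun_prop) (by fun_prop),
      intervalIntegral.integral_eq_sub_of_hasDerivAt_of_le hπ (f := fun x => f x * sin x)
        (by fun_prop) (fun x hx => (hd x hx).mul (hasDerivAt_sin x))
        (ContinuousOn.intervalIntegrable_of_Icc hπ (by fun_prop))]
    simp
  have hmean_sq : (∫ x in (0 : ℝ)..(2 * π), f x) ^ 2 ≤ (∫ x in (0 : ℝ)..(2 * π), f' x ^ 2) * π := by
    simpa [hparts, integral_sin_sq] using sq_integral_mul_le hπ hf' continuous_sin.continuousOn
  calc ∫ x in (0 : ℝ)..(2 * π), f x ^ 2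
      ≤ (2 * π)⁻¹ * (∫ x in (0 : ℝ)..(2 * π), f x) ^ 2 + ∫ x in (0 : ℝ)..(2 * π), f' x ^ 2 := by
        simpa using integral_sq_le_of_periodic two_pi_pos hf hf' hd hper
    _ ≤ (2 * π)⁻¹ * ((∫ x in (0 : ℝ)..(2 * π), f' x ^ 2) * π)
        + ∫ x in (0 : ℝ)..(2 * π), f' x ^ 2 := by
        gcongr
    _ = _ := by field_simp; ring

/-! ### The center manifold at the critical length `2π` -/

/-- The steady state `1 - cos` of the linearized system on `[0, 2π]`, which spans the center
direction. -/
noncomputable def resonantProfile (x : ℝ) : ℝ :=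
  1 - cos x

/-- The second order corrector of the center manifold, that is, the solution `ψ` of
`ψ' + ψ''' = -φ φ'` for `φ = resonantProfile` which satisfies the boundary conditions and is
orthogonal to `φ`. -/
noncomputable def corrector (x : ℝ) : ℝ :=
  (x - 2 * π) / 2 * sin x - sin x ^ 2 / 6 + 11 / 36 * (1 - cos x)

/-- The first derivative of `corrector`. -/
noncomputable def corrector₁ (x : ℝ) : ℝ :=
  sin x / 2 + (x - 2 * π) / 2 * cos x - sin x * cos x / 3 + 11 / 36 * sin x

/-- The second derivative of `corrector`. -/
noncomputable def corrector₂ (x : ℝ) : ℝ :=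
  cos x - (x - 2 * π) / 2 * sin x - (cos x ^ 2 - sin x ^ 2) / 3 + 11 / 36 * cos x

/-- The third derivative of `corrector`. -/
noncomputable def corrector₃ (x : ℝ) : ℝ :=
  -(3 / 2) * sin x - (x - 2 * π) / 2 * cos x + 4 / 3 * (sin x * cos x) - 11 / 36 * sin x

/-- The point of amplitude `A` on the approximate center manifold. -/
noncomputable def centerManifold (A x : ℝ) : ℝ :=
  A * resonantProfile x + A ^ 2 * corrector x

/-- The spatial derivative of `centerManifold A`. -/
noncomputable def centerManifold₁ (A x : ℝ) : ℝ :=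
  A * sin x + A ^ 2 * corrector₁ x

/-- The second spatial derivative of `centerManifold A`. -/
noncomputable def centerManifold₂ (A x : ℝ) : ℝ :=
  A * cos x + A ^ 2 * corrector₂ x

/-- The third spatial derivative of `centerManifold A`. -/
noncomputable def centerManifold₃ (A x : ℝ) : ℝ :=
  A * -sin x + A ^ 2 * corrector₃ x

/-- The derivative of `centerManifold A` with respect to `A`. -/
noncomputable def centerTangent (A x : ℝ) : ℝ :=
  resonantProfile x + 2 * A * corrector x

@[fun_prop]
theorem continuous_resonantProfile : Continuous resonantProfile := by
  unfold resonantProfile; fun_prop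

@[fun_prop]
theorem continuous_corrector : Continuous corrector := by
  unfold corrector; fun_prop

@[fun_prop]
theorem continuous_centerManifold (A : ℝ) : Continuous (centerManifold A) := by
  unfold centerManifold; fun_prop

@[fun_prop]
theorem continuous_centerTangent (A : ℝ) : Continuous (centerTangent A) := by
  unfold centerTangent; fun_prop

theorem hasDerivAt_resonantProfile (x : ℝ) : HasDerivAt resonantProfile (sin x) x :=
  ((hasDerivAt_cos x).const_sub 1).congr_deriv (neg_neg _)

theorem hasDerivAt_sub_two_pi_div_two (x : ℝ) :
    HasDerivAt (fun x => (x - 2 * π) / 2) (1 / 2) x :=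
  ((hasDerivAt_id x).sub_const _).div_const 2

theorem hasDerivAt_corrector (x : ℝ) : HasDerivAt corrector (corrector₁ x) x := by
  refine HasDerivAt.congr_deriv ((((hasDerivAt_sub_two_pi_div_two x).mul (hasDerivAt_sin x)).sub
    (((hasDerivAt_sin x).pow 2).div_const 6)).add
      ((hasDerivAt_resonantProfile x).const_mul (11 / 36))) ?_
  simp only [corrector₁]
  ring

theorem hasDerivAt_corrector₁ (x : ℝ) : HasDerivAt corrector₁ (corrector₂ x) x := by
  refine HasDerivAt.congr_deriv (((((hasDerivAt_sin x).div_const 2).add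
    ((hasDerivAt_sub_two_pi_div_two x).mul (hasDerivAt_cos x))).sub
      (((hasDerivAt_sin x).mul (hasDerivAt_cos x)).div_const 3)).add
        ((hasDerivAt_sin x).const_mul (11 / 36))) ?_
  simp only [corrector₂]
  ring

theorem hasDerivAt_corrector₂ (x : ℝ) : HasDerivAt corrector₂ (corrector₃ x) x := by
  refine HasDerivAt.congr_deriv ((((hasDerivAt_cos x).sub
    ((hasDerivAt_sub_two_pi_div_two x).mul (hasDerivAt_sin x))).sub
      ((((hasDerivAt_cos x).pow 2).sub ((hasDerivAt_sin x).pow 2)).div_const 3)).add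
        ((hasDerivAt_cos x).const_mul (11 / 36))) ?_
  simp only [corrector₃]
  ring

theorem isProfile_resonantProfile :
    IsProfile (2 * π) resonantProfile sin cos (fun x => -sin x) where
  cont := by fun_prop
  cont₁ := by fun_prop
  cont₂ := by fun_prop
  cont₃ := by fun_prop
  hasDerivAt x _ := hasDerivAt_resonantProfile x
  hasDerivAt₁ x _ := hasDerivAt_sin x
  hasDerivAt₂ x _ := hasDerivAt_cos x
  left := by simp [resonantProfile]
  right := by simp [resonantProfile]
  right_deriv := sin_two_pi

theorem isProfile_corrector : IsProfile (2 * π) corrector corrector₁ corrector₂ corrector₃ where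
  cont := by fun_prop
  cont₁ := by unfold corrector₁; fun_prop
  cont₂ := by unfold corrector₂; fun_prop
  cont₃ := by unfold corrector₃; fun_prop
  hasDerivAt x _ := hasDerivAt_corrector x
  hasDerivAt₁ x _ := hasDerivAt_corrector₁ x
  hasDerivAt₂ x _ := hasDerivAt_corrector₂ x
  left := by simp [corrector]
  right := by simp [corrector]
  right_deriv := by simp [corrector₁]

theorem isProfile_centerManifold (A : ℝ) : IsProfile (2 * π) (centerManifold A)
    (centerManifold₁ A) (centerManifold₂ A) (centerManifold₃ A) :=
  (isProfile_resonantProfile.const_mul A).add (isProfile_corrector.const_mul (A ^ 2))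

/-- The quadratic part in `A` vanishes by the choice of the corrector. -/
theorem kdvField_centerManifold (A x : ℝ) :
    kdvField (centerManifold A) (centerManifold₁ A) (centerManifold₃ A) x
      = -(A ^ 3 * (sin x * corrector x + resonantProfile x * corrector₁ x)
        + A ^ 4 * (corrector x * corrector₁ x)) := by
  have hcorrector : corrector₁ x + corrector₃ x = -(resonantProfile x * sin x) := by
    simp only [corrector₁, corrector₃, resonantProfile]
    ring
  simp only [kdvField, centerManifold, centerManifold₁, centerManifold₃]
  linear_combination -A ^ 2 * hcorrector

theorem centerManifold₁_zero_right (A : ℝ) : centerManifold₁ A 0 = -(π * A ^ 2) := by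
  simp only [centerManifold₁, corrector₁, sin_zero, cos_zero]
  ring

theorem integral_resonantProfile_sq : ∫ x in (0 : ℝ)..(2 * π), resonantProfile x ^ 2 = 3 * π := by
  simp only [resonantProfile, sub_sq, one_pow, mul_one]
  rw [intervalIntegral.integral_add, intervalIntegral.integral_sub,
    intervalIntegral.integral_const_mul, integral_cos_sq, integral_cos]
  · simp only [intervalIntegral.integral_const, smul_eq_mul, sin_two_pi, sin_zero, cos_two_pi,
      cos_zero]
    ring
  all_goals exact Continuous.intervalIntegrable (by fun_prop) _ _

theorem integral_resonantProfile_sq_mul_sin :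
    ∫ x in (0 : ℝ)..(2 * π), resonantProfile x ^ 2 * sin x = 0 := by
  rw [intervalIntegral.integral_eq_sub_of_hasDerivAt (f := fun x => resonantProfile x ^ 3 / 3)
    (fun x _ => (((hasDerivAt_resonantProfile x).pow 3).div_const 3).congr_deriv (by ring))
    (Continuous.intervalIntegrable (by fun_prop) _ _)]
  simp [resonantProfile]

theorem integral_corrector_mul_resonantProfile :
    ∫ x in (0 : ℝ)..(2 * π), corrector x * resonantProfile x = 0 := by
  let F : ℝ → ℝ := fun x => -((x - 2 * π) / 2 * cos x) + sin x / 2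
    - ((x - 2 * π) / 2 * (sin x ^ 2 / 2) - (x - sin x * cos x) / 8) - (x - sin x * cos x) / 12
    + sin x ^ 3 / 18 + 11 / 36 * (3 / 2 * x - 2 * sin x + sin x * cos x / 2)
  have hF (x : ℝ) : HasDerivAt F (corrector x * resonantProfile x) x := by
    have hs := hasDerivAt_sin x
    have hc := hasDerivAt_cos x
    have hx := hasDerivAt_id x
    have hl := hasDerivAt_sub_two_pi_div_two x
    refine HasDerivAt.congr_deriv ((((((hl.mul hc).neg.add (hs.div_const 2)).sub
      ((hl.mul ((hs.pow 2).div_const 2)).sub ((hx.sub (hs.mul hc)).div_const 8))).sub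
        ((hx.sub (hs.mul hc)).div_const 12)).add ((hs.pow 3).div_const 18)).add
          ((((hx.const_mul (3 / 2)).sub (hs.const_mul 2)).add
            ((hs.mul hc).div_const 2)).const_mul (11 / 36))) ?_
    simp only [corrector, resonantProfile, Pi.pow_apply]
    ring_nf
    simp only [sin_sq]
    ring
  rw [intervalIntegral.integral_eq_sub_of_hasDerivAt (fun x _ => hF x)
    (Continuous.intervalIntegrable (by fun_prop) _ _)]
  simp only [F, sin_two_pi, cos_two_pi, sin_zero, cos_zero]
  ring

theorem two_pi_le : 2 * π ≤ 63 / 10 := by linarith [pi_lt_d2]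

theorem abs_resonantProfile_le (x : ℝ) : |resonantProfile x| ≤ 2 := by
  rw [resonantProfile, abs_le]
  constructor <;> linarith [cos_le_one x, neg_one_le_cos x]

theorem abs_sub_two_pi_div_two_mul_le {x c : ℝ} (hx : x ∈ Icc 0 (2 * π)) (hc : |c| ≤ 1) :
    |(x - 2 * π) / 2 * c| ≤ 63 / 20 := by
  have : |(x - 2 * π) / 2| ≤ 63 / 20 := by
    rw [abs_le]
    constructor <;> linarith [hx.1, hx.2, two_pi_le]
  rw [abs_mul]
  simpa using mul_le_mul this hc (abs_nonneg c) (by norm_num)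

theorem abs_corrector_le {x : ℝ} (hx : x ∈ Icc 0 (2 * π)) : |corrector x| ≤ 5 := by
  have hlin := abs_le.1 (abs_sub_two_pi_div_two_mul_le hx (abs_sin_le_one x))
  rw [corrector, abs_le]
  constructor <;> linarith [hlin.1, hlin.2, sin_sq_le_one x, sq_nonneg (sin x), cos_le_one x,
    neg_one_le_cos x]

theorem abs_corrector₁_le {x : ℝ} (hx : x ∈ Icc 0 (2 * π)) : |corrector₁ x| ≤ 5 := by
  have hlin := abs_le.1 (abs_sub_two_pi_div_two_mul_le hx (abs_cos_le_one x))
  have hprod : |sin x * cos x| ≤ 1 := by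
    rw [abs_mul]
    exact mul_le_one₀ (abs_sin_le_one x) (abs_nonneg _) (abs_cos_le_one x)
  rw [abs_le] at hprod
  rw [corrector₁, abs_le]
  constructor <;> linarith [hlin.1, hlin.2, hprod.1, hprod.2, sin_le_one x, neg_one_le_sin x]

theorem abs_centerManifold_le {A x : ℝ} (hA : |A| ≤ 1 / 100000) (hx : x ∈ Icc 0 (2 * π)) :
    |centerManifold A x| ≤ 3 * |A| := by
  calc |centerManifold A x| ≤ |A| * |resonantProfile x| + |A| ^ 2 * |corrector x| := by
        rw [← abs_mul, ← abs_pow, ← abs_mul]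
        exact abs_add_le _ _
    _ ≤ |A| * 2 + |A| ^ 2 * 5 := by
        gcongr
        exacts [abs_resonantProfile_le x, abs_corrector_le hx]
    _ ≤ 3 * |A| := by nlinarith [abs_nonneg A]

theorem abs_centerTangent_le {A x : ℝ} (hA : |A| ≤ 1 / 100000) (hx : x ∈ Icc 0 (2 * π)) :
    |centerTangent A x| ≤ 3 := by
  calc |centerTangent A x| ≤ |resonantProfile x| + 2 * |A| * |corrector x| := by
        rw [← abs_two, ← abs_mul, ← abs_mul]
        exact abs_add_le _ _
    _ ≤ 2 + 2 * (1 / 100000) * 5 := by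
        gcongr
        exacts [abs_resonantProfile_le x, abs_corrector_le hx]
    _ ≤ 3 := by norm_num

theorem abs_kdvField_centerManifold_le {A x : ℝ} (hA : |A| ≤ 1 / 100000)
    (hx : x ∈ Icc 0 (2 * π)) :
    |kdvField (centerManifold A) (centerManifold₁ A) (centerManifold₃ A) x| ≤ 16 * |A| ^ 3 := by
  have hcubic : |sin x * corrector x + resonantProfile x * corrector₁ x| ≤ 1 * 5 + 2 * 5 := by
    refine (abs_add_le _ _).trans ?_
    rw [abs_mul, abs_mul]
    gcongr
    exacts [abs_sin_le_one x, abs_corrector_le hx, abs_resonantProfile_le x, abs_corrector₁_le hx]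
  have hquartic : |corrector x * corrector₁ x| ≤ 5 * 5 := by
    rw [abs_mul]
    gcongr
    exacts [abs_corrector_le hx, abs_corrector₁_le hx]
  rw [kdvField_centerManifold, abs_neg]
  refine (abs_add_le _ _).trans ?_
  rw [abs_mul, abs_mul, abs_pow, abs_pow]
  calc _ ≤ |A| ^ 3 * (1 * 5 + 2 * 5) + |A| ^ 4 * (5 * 5) := by gcongr
    _ = |A| ^ 3 * (15 + 25 * |A|) := by ring
    _ ≤ |A| ^ 3 * 16 := by gcongr; linarith
    _ = 16 * |A| ^ 3 := by ring

theorem abs_centerManifold_sq_sub_le {A x : ℝ} (hA : |A| ≤ 1 / 100000)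
    (hx : x ∈ Icc 0 (2 * π)) :
    |centerManifold A x ^ 2 - A ^ 2 * resonantProfile x ^ 2| ≤ 21 * |A| ^ 3 := by
  have hfactor : centerManifold A x ^ 2 - A ^ 2 * resonantProfile x ^ 2
      = A ^ 2 * corrector x * (centerManifold A x + A * resonantProfile x) := by
    simp only [centerManifold]
    ring
  have hsum : |centerManifold A x + A * resonantProfile x| ≤ (4 + 5 * |A|) * |A| := by
    calc |centerManifold A x + A * resonantProfile x|
        = |A * (2 * resonantProfile x + A * corrector x)| := by
          congr 1
          simp only [centerManifold]
          ring
      _ ≤ |A| * (2 * 2 + |A| * 5) := by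
          rw [abs_mul]
          gcongr
          refine (abs_add_le _ _).trans ?_
          rw [abs_mul, abs_mul, abs_two]
          gcongr
          exacts [abs_resonantProfile_le x, abs_corrector_le hx]
      _ = (4 + 5 * |A|) * |A| := by ring
  rw [hfactor, abs_mul, abs_mul, abs_pow]
  calc |A| ^ 2 * |corrector x| * |centerManifold A x + A * resonantProfile x|
      ≤ |A| ^ 2 * 5 * ((4 + 5 * |A|) * |A|) := by
        gcongr
        exact abs_corrector_le hx
    _ = |A| ^ 3 * (20 + 25 * |A|) := by ring
    _ ≤ |A| ^ 3 * 21 := by gcongr; linarith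
    _ = 21 * |A| ^ 3 := by ring

theorem two_mul_add_weighted_mul_le {L G x w w₁ γ : ℝ} (hx : x ∈ Icc 0 L) (hγ : |γ| ≤ G) :
    2 * (w + (1 + x) * w₁) * γ * w ≤ G * ((3 + L) * w ^ 2 + (1 + L) * w₁ ^ 2) := by
  have hG : 0 ≤ G := (abs_nonneg γ).trans hγ
  have hx0 : 0 ≤ 1 + x := by linarith [hx.1]
  calc 2 * (w + (1 + x) * w₁) * γ * w = γ * (2 * w ^ 2 + (1 + x) * (2 * w * w₁)) := by ring
    _ ≤ |γ| * |2 * w ^ 2 + (1 + x) * (2 * w * w₁)| := (le_abs_self _).trans_eq (abs_mul _ _)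
    _ ≤ G * (2 * w ^ 2 + (1 + L) * (w ^ 2 + w₁ ^ 2)) := by
        gcongr
        refine (abs_add_le _ _).trans ?_
        rw [abs_of_nonneg (by positivity : 0 ≤ 2 * w ^ 2), abs_mul, abs_of_nonneg hx0]
        gcongr
        · linarith [hx.2]
        · exact hx.2
        · rw [abs_le]
          constructor <;> linarith [sq_nonneg (w + w₁), sq_nonneg (w - w₁)]
    _ = G * ((3 + L) * w ^ 2 + (1 + L) * w₁ ^ 2) := by ring

namespace IsProfile

variable {L G : ℝ} {f f₁ f₂ f₃ g g₁ g₂ g₃ : ℝ → ℝ}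

theorem integral_add_weighted_deriv_mul_sq (hL : 0 ≤ L) (hf : IsProfile L f f₁ f₂ f₃) :
    ∫ x in (0 : ℝ)..L, (f x + (1 + x) * f₁ x) * f x ^ 2
      = 2 / 3 * ∫ x in (0 : ℝ)..L, f x ^ 3 := by
  obtain ⟨c, c₁, -, -, d, -, -, hl, hr, -⟩ := hf
  have hd (x : ℝ) (hx : x ∈ Ioo 0 L) : HasDerivAt (fun x => (1 + x) * f x ^ 3 / 3)
      ((f x + (1 + x) * f₁ x) * f x ^ 2 - 2 / 3 * f x ^ 3) x := by
    refine ((((hasDerivAt_id x).const_add 1).mul ((d x hx).pow 3)).div_const 3).congr_deriv ?_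
    simp only [Pi.pow_apply, id]
    ring
  have hflux := integral_add_eq_sub_add_of_hasDerivAt hL (R := fun x => 2 / 3 * f x ^ 3)
    (by fun_prop) (by fun_prop) (by fun_prop) hd
  simpa [hl, hr, intervalIntegral.integral_const_mul] using hflux

theorem integral_pow_three_le (hL : 0 ≤ L) (hf : IsProfile L f f₁ f₂ f₃) :
    ∫ x in (0 : ℝ)..L, f x ^ 3
      ≤ L * (∫ x in (0 : ℝ)..L, f₁ x ^ 2) * ∫ x in (0 : ℝ)..L, |f x| := by
  obtain ⟨c, c₁, -, -, d, -, -, hl, -, -⟩ := hf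
  rw [← intervalIntegral.integral_const_mul]
  refine integral_mono_of_continuousOn hL (by fun_prop) (by fun_prop) fun x hx => ?_
  have hsup := sq_le_mul_integral_sq_deriv c c₁ d hl hx
  rw [sub_zero] at hsup
  calc f x ^ 3 = f x ^ 2 * f x := pow_succ _ _
    _ ≤ f x ^ 2 * |f x| := by gcongr; exact le_abs_self _
    _ ≤ _ := by gcongr

theorem integral_weighted_kdvField_sub_le_of_abs_le (hL : 0 ≤ L) (hf : IsProfile L f f₁ f₂ f₃)
    (hg : IsProfile L g g₁ g₂ g₃) (hgG : ∀ x ∈ Icc 0 L, |g x| ≤ G) :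
    ∫ x in (0 : ℝ)..L, 2 * (1 + x) * (f x - g x) * (kdvField f f₁ f₃ x - kdvField g g₁ g₃ x)
      ≤ -(f₁ 0 - g₁ 0) ^ 2
        + (1 + (3 + L) * G) * (∫ x in (0 : ℝ)..L, (f x - g x) ^ 2)
        + (-3 + (1 + L) * G + 2 / 3 * L * ∫ x in (0 : ℝ)..L, |f x - g x|)
          * ∫ x in (0 : ℝ)..L, (f₁ x - g₁ x) ^ 2 := by
  have hw := hf.sub hg
  have c := hw.cont
  have c₁ := hw.cont₁
  have c₀ := (hf.add hg).cont
  have hcubic := hw.integral_add_weighted_deriv_mul_sq hL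
  have hcubic_le := hw.integral_pow_three_le hL
  rw [integral_weighted_kdvField_sub hL hf hg]
  have hpt : ∫ x in (0 : ℝ)..L, (-3 * (f₁ x - g₁ x) ^ 2 + (f x - g x) ^ 2
        + ((f x - g x) + (1 + x) * (f₁ x - g₁ x)) * (f x + g x) * (f x - g x))
      ≤ ∫ x in (0 : ℝ)..L, ((-3 + (1 + L) * G) * (f₁ x - g₁ x) ^ 2
        + (1 + (3 + L) * G) * (f x - g x) ^ 2
        + (f x - g x + (1 + x) * (f₁ x - g₁ x)) * (f x - g x) ^ 2) := by
    refine integral_mono_of_continuousOn hL (by fun_prop) (by fun_prop) fun x hx => ?_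
    have hcross := two_mul_add_weighted_mul_le (w := f x - g x) (w₁ := f₁ x - g₁ x) hx (hgG x hx)
    linear_combination hcross
  have hsplit : ∫ x in (0 : ℝ)..L, ((-3 + (1 + L) * G) * (f₁ x - g₁ x) ^ 2
        + (1 + (3 + L) * G) * (f x - g x) ^ 2
        + (f x - g x + (1 + x) * (f₁ x - g₁ x)) * (f x - g x) ^ 2)
      = (-3 + (1 + L) * G) * (∫ x in (0 : ℝ)..L, (f₁ x - g₁ x) ^ 2)
        + (1 + (3 + L) * G) * (∫ x in (0 : ℝ)..L, (f x - g x) ^ 2)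
        + 2 / 3 * ∫ x in (0 : ℝ)..L, (f x - g x) ^ 3 := by
    rw [integral_add_of_continuousOn hL (by fun_prop) (by fun_prop),
      integral_add_of_continuousOn hL (by fun_prop) (by fun_prop),
      intervalIntegral.integral_const_mul, intervalIntegral.integral_const_mul, hcubic]
  linarith

end IsProfile

/-! ### Decomposition of a profile along the center manifold -/

/-- The component of `f` along the resonant profile, which parametrizes the center manifold. -/
noncomputable def amplitude (f : ℝ → ℝ) : ℝ :=
  (∫ x in (0 : ℝ)..(2 * π), f x * resonantProfile x) / (3 * π)

/-- The time derivative of the amplitude under the KdV flow, which is purely nonlinear because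
the resonant profile is stationary for the adjoint of the linearized equation. -/
noncomputable def amplitudeRate (f : ℝ → ℝ) : ℝ :=
  (∫ x in (0 : ℝ)..(2 * π), f x ^ 2 * sin x) / (6 * π)

/-- The difference between `f` and the point of the center manifold with the same amplitude. -/
noncomputable def deviation (f : ℝ → ℝ) (x : ℝ) : ℝ :=
  f x - centerManifold (amplitude f) x

theorem continuousOn_deviation {f : ℝ → ℝ} {s : Set ℝ} (hf : ContinuousOn f s) :
    ContinuousOn (deviation f) s := by
  unfold deviation
  fun_prop

theorem integral_kdvField_mul_resonantProfile {f f₁ f₂ f₃ : ℝ → ℝ}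
    (hf : IsProfile (2 * π) f f₁ f₂ f₃) :
    ∫ x in (0 : ℝ)..(2 * π), kdvField f f₁ f₃ x * resonantProfile x
      = 1 / 2 * ∫ x in (0 : ℝ)..(2 * π), f x ^ 2 * sin x := by
  have hv := hf.continuousOn_kdvField
  obtain ⟨c, c₁, c₂, -, d, d₁, d₂, hl, hr, -⟩ := hf
  have hd (x : ℝ) (hx : x ∈ Ioo 0 (2 * π)) : HasDerivAt
      (fun x => -(f x * resonantProfile x) - 1 / 2 * (f x ^ 2 * resonantProfile x)
        - f₂ x * resonantProfile x + f₁ x * sin x - f x * cos x)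
      (kdvField f f₁ f₃ x * resonantProfile x - 1 / 2 * (f x ^ 2 * sin x)) x := by
    have dφ := hasDerivAt_resonantProfile x
    refine (((((d x hx).mul dφ).neg.sub ((((d x hx).pow 2).mul dφ).const_mul (1 / 2))).sub
      ((d₂ x hx).mul dφ)).add ((d₁ x hx).mul (hasDerivAt_sin x))).sub
      ((d x hx).mul (hasDerivAt_cos x)) |>.congr_deriv ?_
    simp only [Pi.pow_apply, kdvField, resonantProfile]
    ring
  have hflux := integral_add_eq_sub_add_of_hasDerivAt two_pi_pos.le
    (R := fun x => 1 / 2 * (f x ^ 2 * sin x)) (by fun_prop) (by fun_prop) (by fun_prop) hd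
  simpa [hl, hr, resonantProfile, intervalIntegral.integral_const_mul] using hflux

theorem sq_amplitude_le {f : ℝ → ℝ} (hf : ContinuousOn f (Icc 0 (2 * π))) :
    amplitude f ^ 2 ≤ ∫ x in (0 : ℝ)..(2 * π), f x ^ 2 := by
  have hE : 0 ≤ ∫ x in (0 : ℝ)..(2 * π), f x ^ 2 :=
    intervalIntegral.integral_nonneg two_pi_pos.le fun x _ => sq_nonneg _
  have hCS := sq_integral_mul_le two_pi_pos.le hf
    (by fun_prop : ContinuousOn resonantProfile (Icc 0 (2 * π)))
  rw [integral_resonantProfile_sq] at hCS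
  rw [amplitude, div_pow, div_le_iff₀ (by positivity)]
  refine hCS.trans (mul_le_mul_of_nonneg_left ?_ hE)
  nlinarith [pi_gt_three]

theorem integral_deviation_mul_resonantProfile {f : ℝ → ℝ}
    (hf : ContinuousOn f (Icc 0 (2 * π))) :
    ∫ x in (0 : ℝ)..(2 * π), deviation f x * resonantProfile x = 0 := by
  have hexpand (x : ℝ) : deviation f x * resonantProfile x = f x * resonantProfile x
      - amplitude f * resonantProfile x ^ 2
      - amplitude f ^ 2 * (corrector x * resonantProfile x) := by
    simp only [deviation, centerManifold]
    ring
  simp only [hexpand]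
  rw [integral_sub_of_continuousOn two_pi_pos.le (by fun_prop) (by fun_prop),
    integral_sub_of_continuousOn two_pi_pos.le (by fun_prop) (by fun_prop),
    intervalIntegral.integral_const_mul, intervalIntegral.integral_const_mul,
    integral_resonantProfile_sq, integral_corrector_mul_resonantProfile, amplitude]
  field_simp
  ring

theorem abs_amplitudeRate_le {f : ℝ → ℝ} (hf : ContinuousOn f (Icc 0 (2 * π)))
    {A : ℝ} (hA : |A| ≤ 1 / 100000) :
    18 * |amplitudeRate f| ≤ (∫ x in (0 : ℝ)..(2 * π), (f x - centerManifold A x) ^ 2)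
      + 6 * |A| * (∫ x in (0 : ℝ)..(2 * π), |f x - centerManifold A x|) + 150 * |A| ^ 3 := by
  have hpt (x : ℝ) (hx : x ∈ Icc 0 (2 * π)) :
      |(f x ^ 2 - A ^ 2 * resonantProfile x ^ 2) * sin x|
        ≤ (f x - centerManifold A x) ^ 2 + 6 * |A| * |f x - centerManifold A x|
          + 21 * |A| ^ 3 := by
    have hsplit : f x ^ 2 - A ^ 2 * resonantProfile x ^ 2 = (f x - centerManifold A x) ^ 2
        + 2 * centerManifold A x * (f x - centerManifold A x)
        + (centerManifold A x ^ 2 - A ^ 2 * resonantProfile x ^ 2) := by ring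
    rw [abs_mul]
    refine (mul_le_of_le_one_right (abs_nonneg _) (abs_sin_le_one x)).trans ?_
    rw [hsplit]
    refine (abs_add_le _ _).trans
      (add_le_add ((abs_add_le _ _).trans (add_le_add ?_ ?_)) (abs_centerManifold_sq_sub_le hA hx))
    · rw [abs_of_nonneg (sq_nonneg _)]
    · rw [abs_mul, abs_mul, abs_two]
      linarith [mul_le_mul_of_nonneg_right (abs_centerManifold_le hA hx)
        (abs_nonneg (f x - centerManifold A x))]
  have hrate : ∫ x in (0 : ℝ)..(2 * π), (f x ^ 2 - A ^ 2 * resonantProfile x ^ 2) * sin x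
      = 6 * π * amplitudeRate f := by
    simp only [sub_mul, mul_assoc]
    rw [integral_sub_of_continuousOn two_pi_pos.le (by fun_prop) (by fun_prop),
      intervalIntegral.integral_const_mul, integral_resonantProfile_sq_mul_sin, amplitudeRate]
    field_simp
    ring
  have hint := (intervalIntegral.abs_integral_le_integral_abs two_pi_pos.le).trans
    (integral_mono_of_continuousOn two_pi_pos.le (by fun_prop) (by fun_prop) hpt)
  rw [hrate, integral_add_of_continuousOn two_pi_pos.le (by fun_prop) (by fun_prop),
    integral_add_of_continuousOn two_pi_pos.le (by fun_prop) (by fun_prop),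
    intervalIntegral.integral_const_mul, intervalIntegral.integral_const, smul_eq_mul, sub_zero,
    abs_mul, abs_of_pos (by positivity : 0 < 6 * π)] at hint
  have hπ : 18 * |amplitudeRate f| ≤ 6 * π * |amplitudeRate f| := by
    gcongr
    linarith [pi_gt_three]
  have hcubic : 2 * π * (21 * |A| ^ 3) ≤ 150 * |A| ^ 3 := by
    nlinarith [two_pi_le, pow_nonneg (abs_nonneg A) 3]
  linarith

/-! ### Dissipation near the center manifold -/

theorem weighted_mul_centerManifold_residual_le {A x : ℝ} (hA : |A| ≤ 1 / 100000)
    (hx : x ∈ Icc 0 (2 * π)) (a w : ℝ) :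
    2 * (1 + x) * w * (kdvField (centerManifold A) (centerManifold₁ A) (centerManifold₃ A) x
        - a * centerTangent A x)
      ≤ (256 * |A| ^ 3 + 48 * |a|) * |w| := by
  have hweight : |2 * (1 + x)| ≤ 16 := by
    rw [abs_le]
    constructor <;> linarith [hx.1, hx.2, two_pi_le]
  have hr : |kdvField (centerManifold A) (centerManifold₁ A) (centerManifold₃ A) x
      - a * centerTangent A x| ≤ 16 * |A| ^ 3 + |a| * 3 := by
    refine (abs_sub _ _).trans (add_le_add (abs_kdvField_centerManifold_le hA hx) ?_)
    rw [abs_mul]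
    gcongr
    exact abs_centerTangent_le hA hx
  calc _ ≤ 16 * |w| * (16 * |A| ^ 3 + |a| * 3) := by
        refine (le_abs_self _).trans ?_
        rw [abs_mul, abs_mul]
        gcongr
    _ = (256 * |A| ^ 3 + 48 * |a|) * |w| := by ring

theorem integral_weighted_sub_centerManifold_le {f f₁ f₂ f₃ : ℝ → ℝ}
    (hf : IsProfile (2 * π) f f₁ f₂ f₃) {A : ℝ} (hA : |A| ≤ 1 / 100000) (a : ℝ) :
    ∫ x in (0 : ℝ)..(2 * π), 2 * (1 + x) * (f x - centerManifold A x)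
        * (kdvField f f₁ f₃ x - a * centerTangent A x)
      ≤ -(f₁ 0 - centerManifold₁ A 0) ^ 2
        + (1 + 28 * |A|) * (∫ x in (0 : ℝ)..(2 * π), (f x - centerManifold A x) ^ 2)
        + (-3 + 22 * |A| + 5 * ∫ x in (0 : ℝ)..(2 * π), |f x - centerManifold A x|)
          * (∫ x in (0 : ℝ)..(2 * π), (f₁ x - centerManifold₁ A x) ^ 2)
        + (256 * |A| ^ 3 + 48 * |a|) * ∫ x in (0 : ℝ)..(2 * π), |f x - centerManifold A x| := by
  have hL := two_pi_pos.le
  have hg := isProfile_centerManifold A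
  have hv := hf.continuousOn_kdvField
  have hvg := hg.continuousOn_kdvField
  have c := (hf.sub hg).cont
  have hsplit : ∫ x in (0 : ℝ)..(2 * π), 2 * (1 + x) * (f x - centerManifold A x)
        * (kdvField f f₁ f₃ x - a * centerTangent A x)
      ≤ ∫ x in (0 : ℝ)..(2 * π), (2 * (1 + x) * (f x - centerManifold A x)
          * (kdvField f f₁ f₃ x
            - kdvField (centerManifold A) (centerManifold₁ A) (centerManifold₃ A) x)
        + (256 * |A| ^ 3 + 48 * |a|) * |f x - centerManifold A x|) := by
    refine integral_mono_of_continuousOn hL (by fun_prop) (by fun_prop) fun x hx => ?_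
    linarith [weighted_mul_centerManifold_residual_le hA hx a (f x - centerManifold A x)]
  rw [integral_add_of_continuousOn hL (by fun_prop) (by fun_prop),
    intervalIntegral.integral_const_mul] at hsplit
  have hmain := hf.integral_weighted_kdvField_sub_le_of_abs_le hL hg
    fun x hx => abs_centerManifold_le hA hx
  have hS : 0 ≤ ∫ x in (0 : ℝ)..(2 * π), |f x - centerManifold A x| :=
    intervalIntegral.integral_nonneg hL fun x _ => abs_nonneg _
  have hLA := mul_le_mul_of_nonneg_right two_pi_le (abs_nonneg A)
  have hLS := mul_le_mul_of_nonneg_right two_pi_le hS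
  refine hsplit.trans (add_le_add (hmain.trans (add_le_add (add_le_add le_rfl ?_) ?_)) le_rfl)
  · exact mul_le_mul_of_nonneg_right (by linarith [abs_nonneg A])
      (intervalIntegral.integral_nonneg hL fun x _ => sq_nonneg _)
  · exact mul_le_mul_of_nonneg_right (by linarith [abs_nonneg A])
      (intervalIntegral.integral_nonneg hL fun x _ => sq_nonneg _)

/-- The Poincaré constant `3 / 2` leaves a margin of `1 / 2` in front of `n`, which absorbs every
term carrying a small factor. -/
theorem dissipation_polynomial_le {n D S A a : ℝ} (hn : 0 ≤ n) (hS : 0 ≤ S) (hA : |A| ≤ 1 / 100000)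
    (hS' : S ≤ 1 / 10000) (hnD : n ≤ 3 / 2 * D) (hSn : S ^ 2 ≤ 63 / 10 * n)
    (ha : 18 * |a| ≤ n + 6 * |A| * S + 150 * |A| ^ 3) :
    (1 + 28 * |A|) * n + (-3 + 22 * |A| + 5 * S) * D + (256 * |A| ^ 3 + 48 * |a|) * S
      ≤ A ^ 4 - 1 / 2 * n := by
  have hD : (-3 + 22 * |A| + 5 * S) * D ≤ (-3 + 22 * |A| + 5 * S) * (2 / 3 * n) :=
    mul_le_mul_of_nonpos_left (by linarith) (by linarith)
  have hrate := mul_le_mul_of_nonneg_right ha hS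
  have hnS := mul_le_mul_of_nonneg_right hS' hn
  have hnA := mul_le_mul_of_nonneg_right hA hn
  have hAS : |A| * S ^ 2 ≤ 1 / 100000 * (63 / 10 * n) := by gcongr
  have hA3S : |A| ^ 3 * S ≤ 1 / 100000 * (A ^ 4 + 63 / 10 * n) := by
    calc |A| ^ 3 * S = |A| * (|A| ^ 2 * S) := by ring
      _ ≤ 1 / 100000 * (A ^ 4 + S ^ 2) := by
        rw [sq_abs]
        gcongr
        nlinarith [sq_nonneg (A ^ 2 - S), sq_nonneg (A ^ 2 + S)]
      _ ≤ 1 / 100000 * (A ^ 4 + 63 / 10 * n) := by gcongr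
  nlinarith [pow_nonneg (sq_nonneg A) 2]

theorem integral_sq_le_of_abs_sub_le {f g : ℝ → ℝ} {a b c : ℝ} (hab : a ≤ b)
    (hf : ContinuousOn f (Icc a b)) (hg : ContinuousOn g (Icc a b))
    (h : ∀ x ∈ Icc a b, |f x - g x| ≤ c) :
    ∫ x in a..b, f x ^ 2 ≤ 2 * (∫ x in a..b, g x ^ 2) + 2 * (b - a) * c ^ 2 := by
  calc ∫ x in a..b, f x ^ 2 ≤ ∫ x in a..b, (2 * g x ^ 2 + 2 * c ^ 2) := by
        refine integral_mono_of_continuousOn hab (by fun_prop) (by fun_prop) fun x hx => ?_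
        have hsq : (f x - g x) ^ 2 ≤ c ^ 2 := sq_le_sq.2 ((h x hx).trans (le_abs_self c))
        linarith [sq_nonneg (f x - 2 * g x)]
    _ = _ := by
        rw [integral_add_of_continuousOn hab (by fun_prop) (by fun_prop),
          intervalIntegral.integral_const_mul, intervalIntegral.integral_const, smul_eq_mul]
        ring

theorem integral_deviation_sq_le {f : ℝ → ℝ} (hf : ContinuousOn f (Icc 0 (2 * π)))
    (hA : |amplitude f| ≤ 1 / 100000) :
    ∫ x in (0 : ℝ)..(2 * π), deviation f x ^ 2
      ≤ 2 * (∫ x in (0 : ℝ)..(2 * π), f x ^ 2) + 126 * amplitude f ^ 2 := by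
  refine (integral_sq_le_of_abs_sub_le two_pi_pos.le (g := f) (c := 3 * |amplitude f|)
    (continuousOn_deviation hf) hf fun x hx => ?_).trans ?_
  · rw [deviation, sub_sub_cancel_left, abs_neg]
    exact abs_centerManifold_le hA hx
  · rw [mul_pow, sq_abs]
    nlinarith [two_pi_le, sq_nonneg (amplitude f)]

theorem integral_sq_le_deviation_add_amplitude {f : ℝ → ℝ} (hf : ContinuousOn f (Icc 0 (2 * π)))
    (hA : |amplitude f| ≤ 1 / 100000) :
    ∫ x in (0 : ℝ)..(2 * π), f x ^ 2
      ≤ 2 * (∫ x in (0 : ℝ)..(2 * π), deviation f x ^ 2) + 126 * amplitude f ^ 2 := by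
  refine (integral_sq_le_of_abs_sub_le two_pi_pos.le (g := deviation f) (c := 3 * |amplitude f|)
    hf (continuousOn_deviation hf) fun x hx => ?_).trans ?_
  · rw [deviation, sub_sub_cancel]
    exact abs_centerManifold_le hA hx
  · rw [mul_pow, sq_abs]
    nlinarith [two_pi_le, sq_nonneg (amplitude f)]

theorem abs_amplitude_le {f : ℝ → ℝ} (hf : ContinuousOn f (Icc 0 (2 * π)))
    (hE : ∫ x in (0 : ℝ)..(2 * π), f x ^ 2 ≤ 1 / 10 ^ 12) : |amplitude f| ≤ 1 / 100000 := by
  refine abs_le_of_sq_le_sq ((sq_amplitude_le hf).trans (hE.trans ?_)) (by norm_num)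
  norm_num

theorem integral_abs_deviation_le {f : ℝ → ℝ} (hf : ContinuousOn f (Icc 0 (2 * π)))
    (hE : ∫ x in (0 : ℝ)..(2 * π), f x ^ 2 ≤ 1 / 10 ^ 12) :
    ∫ x in (0 : ℝ)..(2 * π), |deviation f x| ≤ 1 / 10000 := by
  have hw := continuousOn_deviation hf
  have hn := integral_deviation_sq_le hf (abs_amplitude_le hf hE)
  have hCS := sq_integral_abs_le two_pi_pos.le hw
  have hn0 : 0 ≤ ∫ x in (0 : ℝ)..(2 * π), deviation f x ^ 2 :=
    intervalIntegral.integral_nonneg two_pi_pos.le fun x _ => sq_nonneg _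
  refine le_of_sq_le_sq (b := 1 / 10000) ?_ (by norm_num)
  nlinarith [two_pi_le, sq_amplitude_le hf]

theorem integral_deviation_sq_le_integral_deriv_sq {f f₁ f₂ f₃ : ℝ → ℝ}
    (hf : IsProfile (2 * π) f f₁ f₂ f₃) :
    ∫ x in (0 : ℝ)..(2 * π), deviation f x ^ 2
      ≤ 3 / 2 * ∫ x in (0 : ℝ)..(2 * π), (f₁ x - centerManifold₁ (amplitude f) x) ^ 2 := by
  have hw := hf.sub (isProfile_centerManifold (amplitude f))
  refine integral_sq_le_of_integral_mul_one_sub_cos_eq_zero hw.cont hw.cont₁ hw.hasDerivAt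
    (hw.left.trans hw.right.symm) ?_
  exact integral_deviation_mul_resonantProfile hf.cont

theorem integral_weighted_deviation_le {f f₁ f₂ f₃ : ℝ → ℝ} (hf : IsProfile (2 * π) f f₁ f₂ f₃)
    (hE : ∫ x in (0 : ℝ)..(2 * π), f x ^ 2 ≤ 1 / 10 ^ 12) :
    ∫ x in (0 : ℝ)..(2 * π), 2 * (1 + x) * deviation f x
        * (kdvField f f₁ f₃ x - amplitudeRate f * centerTangent (amplitude f) x)
      ≤ -(f₁ 0 + π * amplitude f ^ 2) ^ 2 + amplitude f ^ 4
        - 1 / 2 * ∫ x in (0 : ℝ)..(2 * π), deviation f x ^ 2 := by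
  have hA := abs_amplitude_le hf.cont hE
  have hmain := integral_weighted_sub_centerManifold_le hf hA (amplitudeRate f)
  have hCS : (∫ x in (0 : ℝ)..(2 * π), |deviation f x|) ^ 2
      ≤ 63 / 10 * ∫ x in (0 : ℝ)..(2 * π), deviation f x ^ 2 := by
    refine (sq_integral_abs_le two_pi_pos.le (continuousOn_deviation hf.cont)).trans ?_
    gcongr
    · exact intervalIntegral.integral_nonneg two_pi_pos.le fun x _ => sq_nonneg _
    · linarith [two_pi_le]
  have habs := dissipation_polynomial_le
    (intervalIntegral.integral_nonneg two_pi_pos.le fun x _ => sq_nonneg _)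
    (intervalIntegral.integral_nonneg two_pi_pos.le fun x _ => abs_nonneg _) hA
    (integral_abs_deviation_le hf.cont hE) (integral_deviation_sq_le_integral_deriv_sq hf) hCS
    (abs_amplitudeRate_le hf.cont hA)
  rw [centerManifold₁_zero_right, sub_neg_eq_add] at hmain
  simp only [deviation] at habs ⊢
  linarith

theorem integral_dissipation_le {f f₁ f₂ f₃ : ℝ → ℝ} (hf : IsProfile (2 * π) f f₁ f₂ f₃)
    (hE : ∫ x in (0 : ℝ)..(2 * π), f x ^ 2 ≤ 1 / 10 ^ 12) :
    ∫ x in (0 : ℝ)..(2 * π), (2 * f x * kdvField f f₁ f₃ x + 2 * (1 + x) * deviation f x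
        * (kdvField f f₁ f₃ x - amplitudeRate f * centerTangent (amplitude f) x))
      ≤ -(amplitude f ^ 4 + 1 / 2 * ∫ x in (0 : ℝ)..(2 * π), deviation f x ^ 2) := by
  have c := hf.cont
  have hw := continuousOn_deviation c
  have hv := hf.continuousOn_kdvField
  have hdev := integral_weighted_deviation_le hf hE
  -- The traces `f₁ 0` and `f₁ 0 + π A²`, one from each summand, vanish together only if `A = 0`.
  have hflux : 2 * amplitude f ^ 4 ≤ f₁ 0 ^ 2 + (f₁ 0 + π * amplitude f ^ 2) ^ 2 := by
    have hπ : 9 * amplitude f ^ 4 ≤ π ^ 2 * amplitude f ^ 4 := by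
      gcongr
      nlinarith [pi_gt_three]
    nlinarith [sq_nonneg (2 * f₁ 0 + π * amplitude f ^ 2), pow_nonneg (sq_nonneg (amplitude f)) 2]
  rw [integral_add_of_continuousOn two_pi_pos.le (by fun_prop) (by fun_prop),
    hf.integral_two_mul_kdvField two_pi_pos.le]
  linarith

/-! ### Decay of the energy -/

/-- The Lyapunov functional: the energy plus a weighted energy of the deviation from the center
manifold. -/
noncomputable def lyapunov (f : ℝ → ℝ) : ℝ :=
  ∫ x in (0 : ℝ)..(2 * π), (f x ^ 2 + (1 + x) * deviation f x ^ 2)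

theorem lyapunov_nonneg (f : ℝ → ℝ) : 0 ≤ lyapunov f :=
  intervalIntegral.integral_nonneg two_pi_pos.le fun x hx => by
    have := hx.1
    positivity

theorem sq_integral_sq_le_amplitude_add_deviation {f : ℝ → ℝ} (hf : ContinuousOn f (Icc 0 (2 * π)))
    (hE : ∫ x in (0 : ℝ)..(2 * π), f x ^ 2 ≤ 1 / 10 ^ 12) :
    (∫ x in (0 : ℝ)..(2 * π), f x ^ 2) ^ 2
      ≤ 40000 * (amplitude f ^ 4 + 1 / 2 * ∫ x in (0 : ℝ)..(2 * π), deviation f x ^ 2) := by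
  have hA := abs_amplitude_le hf hE
  have hE0 : 0 ≤ ∫ x in (0 : ℝ)..(2 * π), f x ^ 2 :=
    intervalIntegral.integral_nonneg two_pi_pos.le fun x _ => sq_nonneg _
  have hn0 : 0 ≤ ∫ x in (0 : ℝ)..(2 * π), deviation f x ^ 2 :=
    intervalIntegral.integral_nonneg two_pi_pos.le fun x _ => sq_nonneg _
  have hn1 : ∫ x in (0 : ℝ)..(2 * π), deviation f x ^ 2 ≤ 1 := by
    linarith [integral_deviation_sq_le hf hA, sq_amplitude_le hf]
  have hEn := integral_sq_le_deviation_add_amplitude hf hA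
  generalize (∫ x in (0 : ℝ)..(2 * π), deviation f x ^ 2) = n at *
  calc (∫ x in (0 : ℝ)..(2 * π), f x ^ 2) ^ 2 ≤ (2 * n + 126 * amplitude f ^ 2) ^ 2 := by gcongr
    _ ≤ 40000 * (amplitude f ^ 4 + 1 / 2 * n) := by
      nlinarith [sq_nonneg (2 * n - 126 * amplitude f ^ 2), pow_nonneg (sq_nonneg (amplitude f)) 2]

namespace IsNonlinearKdVSolIci

variable {p q t c : ℝ} {y : ℝ → ℝ → ℝ}

theorem continuousOn_amplitude (h : IsNonlinearKdVSolIci (2 * π) y) (hp : 0 ≤ p) :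
    ContinuousOn (fun t => amplitude (y t)) (Icc p q) := by
  refine (continuousOn_integral_of_continuousOn_uncurry two_pi_pos.le ?_).div_const _
  exact (h.continuousOn_uncurry hp).mul (f := Function.uncurry y)
    (g := fun z => resonantProfile z.2) (by fun_prop)

theorem continuousOn_amplitudeRate (h : IsNonlinearKdVSolIci (2 * π) y) (hp : 0 ≤ p) :
    ContinuousOn (fun t => amplitudeRate (y t)) (Icc p q) := by
  refine (continuousOn_integral_of_continuousOn_uncurry two_pi_pos.le ?_).div_const _
  exact ((h.continuousOn_uncurry hp).pow 2).mul (f := fun z => Function.uncurry y z ^ 2)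
    (g := fun z => sin z.2) (by fun_prop)

theorem hasDerivAt_amplitude (h : IsNonlinearKdVSolIci (2 * π) y) (ht : 0 < t) :
    HasDerivAt (fun s => amplitude (y s)) (amplitudeRate (y t)) t := by
  have hrate (s : ℝ) (hs : 0 ≤ s) :
      ∫ x in (0 : ℝ)..(2 * π), kdvVelocity (2 * π) (y s) x * resonantProfile x
        = 3 * π * amplitudeRate (y s) := by
    rw [kdvVelocity, integral_kdvField_mul_resonantProfile (h.isProfile two_pi_pos hs),
      amplitudeRate]
    field_simp
    ring
  have hcoef := ((h.hasTimeDerivOn two_pi_pos (q := t + 1) (half_pos ht)).mul two_pi_pos.le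
    (HasTimeDerivOn.const (ρ := resonantProfile) (by fun_prop))).congr_deriv
      (g₂ := fun s x => kdvVelocity (2 * π) (y s) x * resonantProfile x)
      fun s x => by rw [mul_zero, add_zero]
  have hcont : ContinuousOn (fun s => ∫ x in (0 : ℝ)..(2 * π),
      kdvVelocity (2 * π) (y s) x * resonantProfile x) (Icc (t / 2) (t + 1)) :=
    ((h.continuousOn_amplitudeRate (half_pos ht).le).const_mul (3 * π)).congr
      fun s hs => hrate s ((half_pos ht).le.trans hs.1)
  refine ((hcoef.hasDerivAt_integral two_pi_pos.le hcont
    ⟨by linarith, by linarith⟩).div_const (3 * π)).congr_deriv ?_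
  rw [hrate t ht.le, mul_div_cancel_left₀ _ (by positivity)]

theorem hasTimeDerivOn_deviation (h : IsNonlinearKdVSolIci (2 * π) y) (hp : 0 < p) :
    HasTimeDerivOn (2 * π) p q (fun t => deviation (y t))
      (fun t x => kdvVelocity (2 * π) (y t) x
        - amplitudeRate (y t) * centerTangent (amplitude (y t)) x) := by
  have hL := two_pi_pos.le
  have hA : HasTimeDerivOn (2 * π) p q (fun t _ => amplitude (y t))
      (fun t _ => amplitudeRate (y t)) :=
    .of_time (h.continuousOn_amplitude hp.le) (h.continuousOn_amplitudeRate hp.le)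
      fun t ht => h.hasDerivAt_amplitude (hp.trans ht.1)
  have hφ : HasTimeDerivOn (2 * π) p q (fun _ => resonantProfile) (fun _ _ => 0) :=
    .const (by fun_prop)
  have hψ : HasTimeDerivOn (2 * π) p q (fun _ => corrector) (fun _ _ => 0) :=
    .const (by fun_prop)
  have hcm := (hA.mul hL hφ).add hL ((hA.mul hL hA).mul hL hψ)
  have hdev : (fun t => deviation (y t)) = fun t x =>
      y t x - (amplitude (y t) * resonantProfile x
        + amplitude (y t) * amplitude (y t) * corrector x) := by
    funext t x
    simp only [deviation, centerManifold, sq]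
  rw [hdev]
  refine ((h.hasTimeDerivOn two_pi_pos hp).sub hL hcm).congr_deriv fun t x => ?_
  simp only [centerTangent]
  ring

theorem lyapunov_sub_le (h : IsNonlinearKdVSolIci (2 * π) y) (hp : 0 < p) (hpq : p ≤ q)
    (hE : ∀ t ∈ Icc p q, ∫ x in (0 : ℝ)..(2 * π), y t x ^ 2 ≤ 1 / 10 ^ 12)
    (hc : ∀ t ∈ Icc p q,
      c ≤ amplitude (y t) ^ 4 + 1 / 2 * ∫ x in (0 : ℝ)..(2 * π), deviation (y t) x ^ 2) :
    lyapunov (y q) - lyapunov (y p) ≤ -c * (q - p) := by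
  have hV := ((h.hasTimeDerivOn two_pi_pos hp).weighted_sq (ρ := fun _ => 1) two_pi_pos.le
    continuousOn_const).add two_pi_pos.le
      ((h.hasTimeDerivOn_deviation (q := q) hp).weighted_sq (ρ := fun x => 1 + x) two_pi_pos.le
        (by fun_prop))
  simp only [one_mul, mul_one] at hV
  exact hV.integral_sub_integral_le two_pi_pos.le hpq fun t ht =>
    (integral_dissipation_le (h.isProfile two_pi_pos (hp.le.trans ht.1)) (hE t ht)).trans
      (neg_le_neg (hc t ht))

theorem sq_integral_sq_mul_sub_one_le (h : IsNonlinearKdVSolIci (2 * π) y)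
    (hE : ∫ x in (0 : ℝ)..(2 * π), y 0 x ^ 2 ≤ 1 / 10 ^ 12) (ht : 1 ≤ t) :
    (∫ x in (0 : ℝ)..(2 * π), y t x ^ 2) ^ 2 * (t - 1) ≤ 40000 * lyapunov (y 1) := by
  have hanti := h.antitoneOn_integral_sq two_pi_pos
  have hpos {s : ℝ} (hs : s ∈ Icc 1 t) : 0 ≤ s := zero_le_one.trans hs.1
  have hEs (s : ℝ) (hs : s ∈ Icc 1 t) : ∫ x in (0 : ℝ)..(2 * π), y s x ^ 2 ≤ 1 / 10 ^ 12 :=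
    (hanti self_mem_Ici (hpos hs) (hpos hs)).trans hE
  have hV := h.lyapunov_sub_le (c := (∫ x in (0 : ℝ)..(2 * π), y t x ^ 2) ^ 2 / 40000)
    one_pos ht hEs fun s hs => by
      have hts : ∫ x in (0 : ℝ)..(2 * π), y t x ^ 2 ≤ ∫ x in (0 : ℝ)..(2 * π), y s x ^ 2 :=
        hanti (hpos hs) (hpos (right_mem_Icc.2 ht)) hs.2
      rw [div_le_iff₀' (by norm_num)]
      refine le_trans ?_ (sq_integral_sq_le_amplitude_add_deviation
        (h.isProfile two_pi_pos (hpos hs)).cont (hEs s hs))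
      gcongr
      exact intervalIntegral.integral_nonneg two_pi_pos.le fun x _ => sq_nonneg _
  linarith [lyapunov_nonneg (y t)]

end IsNonlinearKdVSolIci

theorem tendsto_zero_of_sq_mul_sub_one_le {E : ℝ → ℝ} {C : ℝ} (hE : ∀ t, 0 ≤ E t)
    (h : ∀ t, 1 ≤ t → E t ^ 2 * (t - 1) ≤ C) : Tendsto E atTop (nhds 0) := by
  have hlim : Tendsto (fun t : ℝ => √(C / (t - 1))) atTop (nhds 0) := by
    simpa [sub_eq_add_neg] using
      ((tendsto_atTop_add_const_right atTop (-1) tendsto_id).const_div_atTop C).sqrt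
  refine squeeze_zero' (Eventually.of_forall hE) ?_ hlim
  filter_upwards [eventually_gt_atTop 1] with t ht
  exact le_sqrt_of_sq_le ((le_div_iff₀ (sub_pos.2 ht)).2 (h t ht.le))

/-- local asymptotic stability (attractivity) of the origin for the
nonlinear KdV equation at the critical length `L = 2π`: there is `δ₁ > 0` such that
every classical solution with `‖y₀‖_{L²(0,2π)} < δ₁` satisfies
`‖y(t,·)‖_{L²(0,2π)} → 0` as `t → +∞`. -/
theorem nonlinearKdV_asymptotic_stability :
    ∃ δ₁ > 0, ∀ y₀ : ℝ → ℝ, L2norm (2 * Real.pi) y₀ < δ₁ →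
      ∀ y : ℝ → ℝ → ℝ, IsNonlinearKdVSolIci (2 * Real.pi) y →
      (∀ x ∈ Icc (0:ℝ) (2 * Real.pi), y 0 x = y₀ x) →
      Tendsto (fun t => L2norm (2 * Real.pi) (y t)) atTop (nhds 0) := by
  refine ⟨1 / 10 ^ 6, by norm_num, fun y₀ hy₀ y hy hinit => ?_⟩
  have hE₀ : ∫ x in (0 : ℝ)..(2 * π), y 0 x ^ 2 ≤ 1 / 10 ^ 12 := by
    have hcongr : L2norm (2 * π) (y 0) = L2norm (2 * π) y₀ := by
      unfold L2norm
      congr 1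
      refine intervalIntegral.integral_congr fun x hx => ?_
      simp only [hinit x (uIcc_of_le two_pi_pos.le ▸ hx)]
    rw [← hcongr] at hy₀
    exact ((sqrt_lt' (by norm_num)).1 hy₀).le.trans (by norm_num)
  have hE : Tendsto (fun t => ∫ x in (0 : ℝ)..(2 * π), y t x ^ 2) atTop (nhds 0) :=
    tendsto_zero_of_sq_mul_sub_one_le
      (fun t => intervalIntegral.integral_nonneg two_pi_pos.le fun x _ => sq_nonneg _)
      fun t ht => hy.sq_integral_sq_mul_sub_one_le hE₀ ht
  simpa only [L2norm, sqrt_zero] using hE.sqrt
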